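/- arXiv:2004.03095 — 3 statements merged into one kernel-verified Lean document; each statement's English description precedes it below -/
import Mathlib

section
/- Let R be an irreducible GRRS in V and θ an automorphism of R. If α and β are linearly independent odd roots fixed by θ (i.e., α, β ∈ S), then there exists a real root γ ∈ R_re with θγ = γ such that (γ,α) ≠ 0 and (γ,β) ≠ 0. -/
/-! The roots `α`, `β` are first joined by a real root `γ`; then `γ` is shown to be determined by
data that `θ` preserves.

*Real roots.* The form `P x y = ∑ k_{ρ,x} k_{ρ,y}`, summed over the real roots `ρ`, is invariant
under real reflections and a sum of squares of integers on the diagonal.  Cauchy–Schwarz then gives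
`0 ≤ k_{γ,γ'} k_{γ',γ} ≤ 4` for real roots, although `B` itself may be indefinite or degenerate
(`cartan_mul_bounds`).  Real roots of equal norm with `k_{γ,γ'} = 2` coincide, since otherwise
`γ + n (γ' - γ)` would be a root for every `n` (`eq_of_cartan_two`).

*Isotropic roots.* If `δ` is isotropic and `γ` real then `k_{γ,δ} ∈ {0, ±1, ±2}`, and
`γ - δ` is a root when `k_{γ,δ} > 0` (`iso_cartan`).

*Joining.* In the non-orthogonality graph on `R`, a path of length three can be shortened by
replacing its two inner vertices by a root that is a combination of both.  Hence orthogonal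
roots have a common neighbour (`exists_common`); for odd roots it can be made real
(`exists_real_common`).

*Fixedness.* If `(α,β) ≠ 0` one takes `γ = α`, `β` or `α ± β`.  If `(α,β) = 0` there are three
cases, up to signs.  For `α, β` both real, `γ = α + β`.  For `α` real and `β` isotropic,
`ε = γ - α` and `β - ε` are roots of opposite norms, and for `α, β` both isotropic, `γ` and
`γ - α - β` are roots of opposite norms.  In the last two cases, comparing these roots with the
ones obtained from `θ γ` forces `k_{γ,θγ} = 2` (respectively `k_{ε,θε} = 2`), so `θ γ = γ`. -/

namespace GRRS

open Submodule

variable {K V : Type*} [Field K] [CharZero K] [AddCommGroup V] [Module K V]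

/-- A root `α` of `R` is *odd* if it is isotropic or `2α ∈ R`; it is *even* otherwise. -/
def IsOddRoot (B : LinearMap.BilinForm K V) (R : Set V) (α : V) : Prop :=
  B α α = 0 ∨ (2 : K) • α ∈ R

/-- `S` is a (finite) generalized reflection root system in `span(S)`, equipped with the
restriction of the symmetric bilinear form `B`.  Axiom (1) is automatic; axiom (2) says that
the functional `(α, ·)` is nonzero on `span(S)`, i.e. it does not vanish on all of `S`. -/
structure IsGRRSIn (B : LinearMap.BilinForm K V) (S : Set V) : Prop where
  finite : S.Finite
  nonempty : S.Nonempty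
  zero_not_mem : (0 : V) ∉ S
  form_ne : ∀ α ∈ S, ∃ β ∈ S, B α β ≠ 0
  reflect_real : ∀ α ∈ S, B α α ≠ 0 → ∀ β ∈ S,
      ∃ n : ℤ, 2 * B α β = (n : K) * B α α ∧ β - (n : K) • α ∈ S
  reflect_iso : ∀ α ∈ S, B α α = 0 → ∃ r : V → V, Set.BijOn r S S ∧
      (∀ β ∈ S, B α β = 0 → r β = β) ∧
      (∀ β ∈ S, B α β ≠ 0 → r β = β + α ∨ r β = β - α)
  neg_mem : ∀ α ∈ S, -α ∈ S

/-- `R` is a (finite) generalized reflection root system in `V`. -/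
structure IsGRRS (B : LinearMap.BilinForm K V) (R : Set V) : Prop where
  finite : R.Finite
  nonempty : R.Nonempty
  zero_not_mem : (0 : V) ∉ R
  spans : span K R = ⊤
  form_ne : ∀ α ∈ R, B α ≠ 0
  reflect_real : ∀ α ∈ R, B α α ≠ 0 → ∀ β ∈ R,
      ∃ n : ℤ, 2 * B α β = (n : K) * B α α ∧ β - (n : K) • α ∈ R
  reflect_iso : ∀ α ∈ R, B α α = 0 → ∃ r : V → V, Set.BijOn r R R ∧
      (∀ β ∈ R, B α β = 0 → r β = β) ∧
      (∀ β ∈ R, B α β ≠ 0 → r β = β + α ∨ r β = β - α)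
  neg_mem : ∀ α ∈ R, -α ∈ R

/-- `R` is irreducible: it cannot be partitioned into two nonempty mutually
orthogonal subsets. -/
def GRRSIrreducible (B : LinearMap.BilinForm K V) (R : Set V) : Prop :=
  ¬ ∃ R₁ R₂ : Set V, R₁.Nonempty ∧ R₂.Nonempty ∧ R₁ ∪ R₂ = R ∧ Disjoint R₁ R₂ ∧
      ∀ α ∈ R₁, ∀ β ∈ R₂, B α β = 0

/-- The real (non-isotropic) roots of `R`. -/
def realRoots (B : LinearMap.BilinForm K V) (R : Set V) : Set V :=
  {α ∈ R | B α α ≠ 0}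

/-- The imaginary (isotropic) roots of `R`. -/
def imRoots (B : LinearMap.BilinForm K V) (R : Set V) : Set V :=
  {α ∈ R | B α α = 0}

/-- Two vectors are chain-connected through `C` if they are joined by a chain of elements
of `C` in which consecutive elements have nonzero inner product. -/
def chainConnected (B : LinearMap.BilinForm K V) (C : Set V) : V → V → Prop :=
  Relation.ReflTransGen (fun x y => x ∈ C ∧ y ∈ C ∧ B x y ≠ 0)

/-- The reflection in a non-isotropic vector `γ`. -/
def reflectionOf (B : LinearMap.BilinForm K V) (γ x : V) : V :=
  x - (2 * B γ x / B γ γ) • γ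

/-- `weylRel B C x y` holds iff `y` is obtained from `x` by applying a finite sequence of
reflections in elements of `C`; for `C` a set of real roots this is the relation
"`x` and `y` lie in the same orbit of the Weyl group generated by `C`". -/
def weylRel (B : LinearMap.BilinForm K V) (C : Set V) : V → V → Prop :=
  Relation.ReflTransGen (fun x y => ∃ γ ∈ C, y = reflectionOf B γ x)

/-- The canonical decomposition `V = V₀ ⊕ V₁ ⊕ ⋯ ⊕ V_n` attached to a GRRS `R`:
`comp i` is the `i`-th irreducible component `R_re^i` of the real roots (a chain-connectivity
class), `proj i.succ` is the projection `p_i` onto `V_i = span(comp i)` and `proj 0` is the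
projection `p_0` onto `V₀`, the orthogonal complement of `U = span(R_re)`. -/
structure RealDecomp (B : LinearMap.BilinForm K V) (R : Set V) (n : ℕ) where
  comp : Fin n → Set V
  proj : Fin (n + 1) → (V →ₗ[K] V)
  comp_subset : ∀ i, comp i ⊆ realRoots B R
  comp_cover : realRoots B R ⊆ ⋃ i, comp i
  comp_classes : ∀ i, ∀ α ∈ comp i, ∀ β ∈ realRoots B R,
      (β ∈ comp i ↔ chainConnected B (realRoots B R) α β)
  proj_sum : ∑ i, proj i = LinearMap.id
  proj_comp : ∀ i j, i ≠ j → (proj i) ∘ₗ (proj j) = 0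
  proj_orth : ∀ i j, i ≠ j → ∀ x y : V, B (proj i x) (proj j y) = 0
  range_succ : ∀ i : Fin n, LinearMap.range (proj i.succ) = span K (comp i)
  range_zero : LinearMap.range (proj 0) =
      LinearMap.BilinForm.orthogonal B (span K (realRoots B R))



section Helpers

set_option linter.unusedSectionVars false

variable {B : LinearMap.BilinForm K V} {R : Set V}

/-! ### Real roots -/

lemma exists_form_ne (hR : IsGRRS B R) {α : V} (hα : α ∈ R) : ∃ x ∈ R, B α x ≠ 0 := by
  by_contra! h
  apply hR.form_ne α hα
  apply LinearMap.ext_on hR.spans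
  intro x hx
  simpa using h x hx

lemma exists_cartan (hR : IsGRRS B R) {γ x : V} (hγ : γ ∈ R) (hN : B γ γ ≠ 0) (hx : x ∈ R) :
    ∃ n : ℤ, 2 * B γ x = (n : K) * B γ γ ∧ x - (n : K) • γ ∈ R :=
  hR.reflect_real γ hγ hN x hx

lemma sub_smul_mem (hR : IsGRRS B R) {γ x : V} (hγ : γ ∈ R) (hN : B γ γ ≠ 0) (hx : x ∈ R)
    {c : K} (h : 2 * B γ x = c * B γ γ) : x - c • γ ∈ R := by
  obtain ⟨n, hn, hm⟩ := hR.reflect_real γ hγ hN x hx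
  have : c = n := mul_right_cancel₀ hN (h.symm.trans hn)
  rwa [this]

lemma reflectionOf_mem (hR : IsGRRS B R) {γ x : V} (hγ : γ ∈ R) (hN : B γ γ ≠ 0) (hx : x ∈ R) :
    reflectionOf B γ x ∈ R :=
  sub_smul_mem hR hγ hN hx (by field_simp)

lemma form_reflectionOf (hB : ∀ x y : V, B x y = B y x) {γ : V} (x y : V) :
    B (reflectionOf B γ x) y = B x (reflectionOf B γ y) := by
  simp only [reflectionOf, map_sub, map_smul, LinearMap.sub_apply, LinearMap.smul_apply,
    smul_eq_mul]
  rw [hB x γ]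
  ring

lemma reflectionOf_reflectionOf {γ : V} (hN : B γ γ ≠ 0) (x : V) :
    reflectionOf B γ (reflectionOf B γ x) = x := by
  simp only [reflectionOf, map_sub, map_smul, smul_eq_mul, sub_sub, ← add_smul]
  have : 2 * B γ x / B γ γ + 2 * (B γ x - 2 * B γ x / B γ γ * B γ γ) / B γ γ = 0 := by
    field_simp
    ring
  rw [this, zero_smul, sub_zero]

/-- The form `∑ k_{ρ,x} k_{ρ,y}` over a finite set `s` of vectors; for `s` the set of real roots it
takes integer values on roots and is positive on real roots. -/
noncomputable def realForm (B : LinearMap.BilinForm K V) (s : Finset V) (x y : V) : K :=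
  ∑ ρ ∈ s, (2 * B ρ x / B ρ ρ) * (2 * B ρ y / B ρ ρ)

lemma realForm_comm (s : Finset V) (x y : V) : realForm B s x y = realForm B s y x :=
  Finset.sum_congr rfl fun _ _ => mul_comm _ _

/-- Invariance of `realForm` under the reflection in `γ`, in the form `2 P(γ,x) = k_{γ,x} P(γ,γ)`. -/
lemma two_mul_realForm (hB : ∀ x y : V, B x y = B y x) (hR : IsGRRS B R) {s : Finset V}
    (hs : ∀ x, x ∈ s ↔ x ∈ R ∧ B x x ≠ 0) {γ : V} (hγ : γ ∈ R) (hN : B γ γ ≠ 0) {x : V} {c : K}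
    (h : 2 * B γ x = c * B γ γ) : 2 * realForm B s γ x = c * realForm B s γ γ := by
  have hnorm : ∀ ρ, B (reflectionOf B γ ρ) (reflectionOf B γ ρ) = B ρ ρ := fun ρ => by
    rw [form_reflectionOf hB, reflectionOf_reflectionOf hN]
  have hmaps : ∀ ρ ∈ s, reflectionOf B γ ρ ∈ s := fun ρ hρ => by
    rw [hs] at hρ ⊢
    exact ⟨reflectionOf_mem hR hγ hN hρ.1, by rw [hnorm]; exact hρ.2⟩
  have hinv : realForm B s γ x = realForm B s (reflectionOf B γ γ) (reflectionOf B γ x) := by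
    symm
    refine Finset.sum_nbij' (reflectionOf B γ) (reflectionOf B γ) hmaps hmaps
      (fun _ _ => reflectionOf_reflectionOf hN _) (fun _ _ => reflectionOf_reflectionOf hN _) ?_
    intro ρ _
    rw [hnorm, form_reflectionOf hB, form_reflectionOf hB]
  have hc : 2 * B γ x / B γ γ = c := by rw [h]; field_simp
  have h1 : reflectionOf B γ γ = -γ := by
    have : 2 * B γ γ / B γ γ = 2 := by field_simp
    rw [reflectionOf, this]
    module
  have h2 : reflectionOf B γ x = x - c • γ := by rw [reflectionOf, hc]
  have hexp : realForm B s (-γ) (x - c • γ) = - realForm B s γ x + c * realForm B s γ γ := by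
    unfold realForm
    rw [Finset.mul_sum, ← Finset.sum_neg_distrib, ← Finset.sum_add_distrib]
    refine Finset.sum_congr rfl fun ρ _ => ?_
    simp only [map_neg, map_sub, map_smul, smul_eq_mul]
    ring
  rw [h1, h2, hexp] at hinv
  linear_combination hinv

/-- Real roots span planes of finite type: the product of the two Cartan integers lies
in `[0, 4]`. -/
lemma cartan_mul_bounds (hB : ∀ x y : V, B x y = B y x) (hR : IsGRRS B R) {γ γ' : V}
    (hγ : γ ∈ R) (hN : B γ γ ≠ 0) (hγ' : γ' ∈ R) (hN' : B γ' γ' ≠ 0) {a b : ℤ}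
    (ha : 2 * B γ γ' = a * B γ γ) (hb : 2 * B γ γ' = b * B γ' γ') : 0 ≤ a * b ∧ a * b ≤ 4 := by
  classical
  let s : Finset V := hR.finite.toFinset.filter fun x => B x x ≠ 0
  have hs : ∀ x, x ∈ s ↔ x ∈ R ∧ B x x ≠ 0 := fun x => by simp [s]
  have hex : ∀ ρ x : V, ∃ n : ℤ, ρ ∈ s → x ∈ R → 2 * B ρ x / B ρ ρ = n := by
    intro ρ x
    by_cases h : ρ ∈ s ∧ x ∈ R
    · have h1 := (hs ρ).1 h.1
      obtain ⟨n, hn, -⟩ := hR.reflect_real ρ h1.1 h1.2 x h.2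
      exact ⟨n, fun _ _ => by rw [hn]; have := h1.2; field_simp⟩
    · exact ⟨0, fun h1 h2 => absurd ⟨h1, h2⟩ h⟩
  choose n hn using hex
  have hP : ∀ x ∈ R, ∀ y ∈ R, realForm B s x y = ((∑ ρ ∈ s, n ρ x * n ρ y : ℤ) : K) := by
    intro x hx y hy
    push_cast
    refine Finset.sum_congr rfl fun ρ hρ => ?_
    rw [hn ρ x hρ hx, hn ρ y hρ hy]
  have hpos : ∀ x ∈ R, B x x ≠ 0 → 0 < ∑ ρ ∈ s, n ρ x ^ 2 := by
    intro x hx hNx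
    have hxs := (hs x).2 ⟨hx, hNx⟩
    have h2 : n x x = 2 := by
      have := hn x x hxs hx
      have h3 : 2 * B x x / B x x = 2 := by field_simp
      rw [h3] at this
      exact_mod_cast this.symm
    exact Finset.sum_pos' (fun _ _ => sq_nonneg _) ⟨x, hxs, by rw [h2]; norm_num⟩
  have h1 := two_mul_realForm hB hR hs hγ hN ha
  have h2 := two_mul_realForm hB hR hs hγ' hN' (x := γ) (c := (b : K)) (by rw [hB γ' γ]; exact hb)
  rw [realForm_comm] at h2
  rw [hP γ hγ γ' hγ', hP γ hγ γ hγ] at h1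
  rw [hP γ hγ γ' hγ', hP γ' hγ' γ' hγ'] at h2
  have cs := Finset.sum_mul_sq_le_sq_mul_sq s (n · γ) (n · γ')
  have p1 := hpos γ hγ hN
  have p2 := hpos γ' hγ' hN'
  simp only [← pow_two] at h1 h2
  set X := ∑ ρ ∈ s, n ρ γ * n ρ γ'
  set Y := ∑ ρ ∈ s, n ρ γ ^ 2
  set Z := ∑ ρ ∈ s, n ρ γ' ^ 2
  have e1 : 2 * X = a * Y := by exact_mod_cast h1
  have e2 : 2 * X = b * Z := by exact_mod_cast h2
  have e : 4 * X ^ 2 = (a * b) * (Y * Z) := by linear_combination 2 * X * e1 + a * Y * e2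
  have hYZ : 0 < Y * Z := mul_pos p1 p2
  constructor
  · by_contra! hlt
    nlinarith [sq_nonneg X]
  · by_contra! hlt
    nlinarith

/-- Real roots of equal norm with Cartan integer `2` coincide. -/
lemma eq_of_cartan_two (hR : IsGRRS B R) (hB : ∀ x y : V, B x y = B y x) {γ γ' : V}
    (hγ : γ ∈ R) (hN : B γ γ ≠ 0) (hγ' : γ' ∈ R) (hN' : B γ' γ' = B γ γ)
    (h : B γ γ' = B γ γ) : γ = γ' := by
  by_contra hne
  have he : γ' - γ ≠ 0 := sub_ne_zero.2 (Ne.symm hne)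
  -- reflecting `γ + m e` in `γ + (m + 1) e` gives `-(γ + (m + 2) e)`, where `e = γ' - γ`
  have key : ∀ m : ℕ, γ + (m : K) • (γ' - γ) ∈ R ∧ γ + ((m : K) + 1) • (γ' - γ) ∈ R := by
    intro m
    induction m with
    | zero => simpa using ⟨hγ, hγ'⟩
    | succ m ih =>
      refine ⟨by push_cast; exact ih.2, ?_⟩
      have hn : ∀ c d : K, B (γ + c • (γ' - γ)) (γ + d • (γ' - γ)) = B γ γ := by
        intro c d
        simp only [map_add, map_sub, map_smul, LinearMap.add_apply, LinearMap.sub_apply,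
          LinearMap.smul_apply, smul_eq_mul]
        rw [hB γ' γ, hN', h]
        ring
      have := sub_smul_mem hR ih.2 (by rw [hn]; exact hN) ih.1 (c := 2) (by rw [hn, hn])
      have := hR.neg_mem _ this
      push_cast
      convert this using 1
      module
  have hinj : Function.Injective fun m : ℕ => γ + (m : K) • (γ' - γ) := by
    intro m m' hm
    have := smul_left_injective K he (add_left_cancel hm)
    exact_mod_cast this
  exact Set.infinite_of_injective_forall_mem hinj (fun m => (key m).1) hR.finite

lemma eq_neg_of_cartan_neg_two (hR : IsGRRS B R) (hB : ∀ x y : V, B x y = B y x) {γ γ' : V}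
    (hγ : γ ∈ R) (hN : B γ γ ≠ 0) (hγ' : γ' ∈ R) (hN' : B γ' γ' = B γ γ)
    (h : B γ γ' = - B γ γ) : γ' = -γ := by
  have := eq_of_cartan_two hR hB hγ hN (hR.neg_mem _ hγ') (by simpa using hN') (by simp [h])
  rw [this, neg_neg]

lemma cartan_bounds_of_norm_eq (hB : ∀ x y : V, B x y = B y x) (hR : IsGRRS B R) {γ γ' : V}
    (hγ : γ ∈ R) (hN : B γ γ ≠ 0) (hγ' : γ' ∈ R) (hN' : B γ' γ' = B γ γ) {a : ℤ}
    (ha : 2 * B γ γ' = a * B γ γ) : -2 ≤ a ∧ a ≤ 2 := by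
  have := (cartan_mul_bounds hB hR hγ hN hγ' (hN' ▸ hN) ha (hN' ▸ ha)).2
  constructor <;> nlinarith

/-! ### Isotropic roots -/

lemma add_or_sub_mem (hR : IsGRRS B R) {δ x : V} (hδ : δ ∈ R) (h0 : B δ δ = 0) (hx : x ∈ R)
    (h : B δ x ≠ 0) : x + δ ∈ R ∨ x - δ ∈ R := by
  obtain ⟨r, hr, -, h2⟩ := hR.reflect_iso δ hδ h0
  have := hr.mapsTo hx
  rcases h2 x hx h with e | e <;> rw [e] at this
  · exact Or.inl this
  · exact Or.inr this

/-- If `γ + δ` is a root then integrality of `k_{γ+δ,δ} = k/(1+k)`, where `k = k_{γ,δ}`, bounds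
`k`. -/
lemma iso_cartan_aux (hR : IsGRRS B R) (hB : ∀ x y : V, B x y = B y x) {γ δ : V}
    (hN : B γ γ ≠ 0) (hδ : δ ∈ R) (h0 : B δ δ = 0) {k : ℤ}
    (hk : 2 * B γ δ = k * B γ γ) (h : γ + δ ∈ R) : k = 0 ∨ k = -1 ∨ k = -2 := by
  by_cases h1 : k = -1
  · exact Or.inr (Or.inl h1)
  have hn : B (γ + δ) (γ + δ) = ((1 + k : ℤ) : K) * B γ γ := by
    simp only [map_add, LinearMap.add_apply]
    rw [hB δ γ, h0]
    push_cast
    linear_combination hk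
  have hn0 : B (γ + δ) (γ + δ) ≠ 0 := by
    rw [hn]
    refine mul_ne_zero ?_ hN
    exact_mod_cast fun h => h1 (by omega)
  obtain ⟨n, e, -⟩ := hR.reflect_real _ h hn0 δ hδ
  rw [hn] at e
  simp only [map_add, LinearMap.add_apply, h0, add_zero, hk] at e
  have e' : (k : K) = n * (1 + k : ℤ) := mul_right_cancel₀ hN (by rw [e]; ring)
  have e'' : k = n * (1 + k) := by exact_mod_cast e'
  have : (1 + k) ∣ 1 := ⟨1 - n, by linear_combination -e''⟩
  rcases Int.isUnit_iff.1 (isUnit_of_dvd_one this) with h | h <;> omega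

lemma iso_cartan (hR : IsGRRS B R) (hB : ∀ x y : V, B x y = B y x) {γ δ : V}
    (hγ : γ ∈ R) (hN : B γ γ ≠ 0) (hδ : δ ∈ R) (h0 : B δ δ = 0) {k : ℤ}
    (hk : 2 * B γ δ = k * B γ γ) (hk0 : k ≠ 0) :
    ((k = 1 ∨ k = 2) ∧ γ - δ ∈ R) ∨ ((k = -1 ∨ k = -2) ∧ γ + δ ∈ R) := by
  have hne : B δ γ ≠ 0 := by
    rw [hB]
    intro h
    rw [h, mul_zero, eq_comm] at hk
    rcases mul_eq_zero.1 hk with h | h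
    · exact hk0 (by exact_mod_cast h)
    · exact hN h
  rcases add_or_sub_mem hR hδ h0 hγ hne with h | h
  · have := iso_cartan_aux hR hB hN hδ h0 hk h
    exact Or.inr ⟨by omega, h⟩
  · have := iso_cartan_aux hR hB hN (δ := -δ) (hR.neg_mem _ hδ) (by simpa using h0) (k := -k)
      (by push_cast; rw [map_neg]; linear_combination -hk) (by rwa [← sub_eq_add_neg])
    exact Or.inl ⟨by omega, h⟩

/-- If `2α` is a root, all Cartan integers `k_{α,x}` are even, since `k_{2α,x} = k_{α,x}/2`. -/
lemma even_cartan (hR : IsGRRS B R) {α x : V} (hN : B α α ≠ 0) (h2 : (2 : K) • α ∈ R)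
    (hx : x ∈ R) {k : ℤ} (hk : 2 * B α x = k * B α α) : ∃ m : ℤ, k = 2 * m := by
  obtain ⟨m, hm, -⟩ := hR.reflect_real _ h2 (by simpa using hN) x hx
  refine ⟨m, ?_⟩
  simp only [map_smul, LinearMap.smul_apply, smul_eq_mul] at hm
  have : (k : K) * B α α = (2 * m) * B α α := by linear_combination hm / 2 - hk
  exact_mod_cast mul_right_cancel₀ hN this

/-! ### Joining orthogonal roots -/

lemma exists_combination (hR : IsGRRS B R) {x y : V}
    (hx : x ∈ R) (hy : y ∈ R) (h : B x y ≠ 0) :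
    ∃ a b : K, a ≠ 0 ∧ b ≠ 0 ∧ a • x + b • y ∈ R := by
  by_cases hN : B x x = 0
  · rcases add_or_sub_mem hR hx hN hy h with e | e
    · exact ⟨1, 1, one_ne_zero, one_ne_zero, by convert e using 1; module⟩
    · exact ⟨-1, 1, by simp, one_ne_zero, by convert e using 1; module⟩
  · obtain ⟨n, hn, hm⟩ := hR.reflect_real x hx hN y hy
    refine ⟨-n, 1, ?_, one_ne_zero, ?_⟩
    · intro h0
      rw [neg_eq_zero] at h0
      rw [h0, zero_mul] at hn
      exact h (by simpa using hn)
    · convert hm using 1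
      module

/-- The non-orthogonality graph of an irreducible GRRS has diameter at most two. -/
lemma exists_common (hR : IsGRRS B R) (hB : ∀ x y : V, B x y = B y x)
    (hirr : GRRSIrreducible B R) {α β : V} (hα : α ∈ R) (hβ : β ∈ R) (h : B α β = 0) :
    ∃ δ ∈ R, B α δ ≠ 0 ∧ B β δ ≠ 0 := by
  let D : Set V := {x | x ∈ R ∧ (B α x ≠ 0 ∨ ∃ y ∈ R, B α y ≠ 0 ∧ B y x ≠ 0)}
  have hD : ∀ x ∈ D, ∀ z ∈ R, B x z ≠ 0 → z ∈ D := by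
    rintro x ⟨hx, hx'⟩ z hz hxz
    refine ⟨hz, Or.inr ?_⟩
    by_cases hαx : B α x = 0
    · obtain ⟨y, hy, hαy, hyx⟩ := hx'.resolve_left (by simpa using hαx)
      by_cases hyz : B y z = 0
      · obtain ⟨a, b, ha, hb, hm⟩ := exists_combination hR hy hx hyx
        refine ⟨_, hm, ?_, ?_⟩
        · simpa [hαx] using ⟨ha, hαy⟩
        · simpa [hyz] using ⟨hb, hxz⟩
      · exact ⟨y, hy, hαy, hyz⟩
    · exact ⟨x, hx, hαx, hxz⟩
  have hβD : β ∈ D := by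
    by_contra hβD
    obtain ⟨x, hx, hαx⟩ := exists_form_ne hR hα
    refine hirr ⟨D, R \ D, ⟨x, hx, Or.inl hαx⟩, ⟨β, hβ, hβD⟩,
      Set.union_sdiff_cancel fun x hx => hx.1, Set.disjoint_sdiff_right, ?_⟩
    intro x hx z hz
    by_contra hxz
    exact hz.2 (hD x hx z hz.1 hxz)
  obtain ⟨δ, hδ, h1, h2⟩ := hβD.2.resolve_left (by simpa using h)
  exact ⟨δ, hδ, h1, by rwa [hB]⟩

lemma exists_real_of_iso (hR : IsGRRS B R) (hB : ∀ x y : V, B x y = B y x) {α β δ : V}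
    (hα : α ∈ R) (h0 : B α α = 0) (h : B α β = 0) (hδ : δ ∈ R) (hδ0 : B δ δ = 0)
    (h1 : B α δ ≠ 0) (h2 : B β δ ≠ 0) :
    ∃ γ ∈ R, B γ γ ≠ 0 ∧ B γ α ≠ 0 ∧ B γ β ≠ 0 := by
  have hδα : B δ α ≠ 0 := by rwa [hB]
  have hδβ : B δ β ≠ 0 := by rwa [hB]
  rcases add_or_sub_mem hR hα h0 hδ h1 with e | e
  · refine ⟨_, e, ?_, ?_, ?_⟩
    · simp only [map_add, LinearMap.add_apply, h0, hδ0, hB δ α]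
      ring_nf
      exact mul_ne_zero h1 two_ne_zero
    · simpa [h0] using hδα
    · simpa [h] using hδβ
  · refine ⟨_, e, ?_, ?_, ?_⟩
    · simp only [map_sub, LinearMap.sub_apply, h0, hδ0, hB δ α]
      ring_nf
      simpa using h1
    · simpa [h0] using hδα
    · simpa [h] using hδβ

/-- Two orthogonal odd real roots and an isotropic root seeing both would generate a system
of type `BC(1,1)`, where the isotropic reflection in `α + β` is not injective: it sends both `2α`
and `-2β` to `α - β`.  The signs are normalized so that `k_{α,δ} = k_{β,δ} = 2`. -/
lemma no_iso_between_real (hR : IsGRRS B R) (hB : ∀ x y : V, B x y = B y x) {α β δ : V}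
    (hα : α ∈ R) (hN : B α α ≠ 0) (hα2 : (2 : K) • α ∈ R)
    (hβ : β ∈ R) (hM : B β β ≠ 0) (hβ2 : (2 : K) • β ∈ R) (h : B α β = 0)
    (hδ : δ ∈ R) (hδ0 : B δ δ = 0) (h1 : B α δ = B α α) (h2 : B β δ = B β β)
    (hαδ : α - δ ∈ R) (hβδ : β - δ ∈ R) : False := by
  have hβα : B β α = 0 := by rw [hB, h]
  have hδα : B δ α = B α α := by rw [hB, h1]
  have hδβ : B δ β = B β β := by rw [hB, h2]
  have n1 : B (α - δ) (α - δ) = - B α α := by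
    simp only [map_sub, LinearMap.sub_apply, h1, hδα, hδ0]; ring
  have n2 : B (β - δ) (β - δ) = - B β β := by
    simp only [map_sub, LinearMap.sub_apply, h2, hδβ, hδ0]; ring
  have b1 : B (α - δ) β = - B β β := by
    simp only [map_sub, LinearMap.sub_apply, h, hδβ]; ring
  have b2 : B (β - δ) α = - B α α := by
    simp only [map_sub, LinearMap.sub_apply, hβα, hδα]; ring
  have n1' : B (α - δ) (α - δ) ≠ 0 := by rw [n1]; exact neg_ne_zero.2 hN
  have n2' : B (β - δ) (β - δ) ≠ 0 := by rw [n2]; exact neg_ne_zero.2 hM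
  obtain ⟨a, ha, -⟩ := exists_cartan hR hαδ n1' hβ
  obtain ⟨b, hb, -⟩ := exists_cartan hR hβδ n2' hα
  have A := (cartan_mul_bounds hB hR hαδ n1' hβ hM ha (b := -2)
    (by rw [b1]; push_cast; ring))
  have A' := (cartan_mul_bounds hB hR hβδ n2' hα hN hb (b := -2)
    (by rw [b2]; push_cast; ring))
  rw [b1, n1] at ha
  rw [b2, n2] at hb
  have hab : a * b = 4 := by
    have : (a : K) * b * (B α α * B β β) = 4 * (B α α * B β β) := by
      linear_combination (b : K) * B β β * ha + 2 * B β β * hb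
    exact_mod_cast mul_right_cancel₀ (mul_ne_zero hN hM) this
  have ha2 : a = -2 := by
    obtain ⟨A1, A2⟩ := A
    obtain ⟨A3, A4⟩ := A'
    have : a = 0 ∨ a = -1 ∨ a = -2 := by omega
    rcases this with rfl | rfl | rfl <;> omega
  have hMN : B β β = - B α α := by
    rw [ha2] at ha
    push_cast at ha
    linear_combination (-1/2 : K) * ha
  have hδe : β = -(α - δ) := eq_neg_of_cartan_neg_two hR hB hαδ n1' hβ (by rw [n1, hMN])
    (by rw [b1, n1, hMN])
  have hδe' : δ = α + β := by rw [hδe]; module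
  -- neither `3α + β` nor `-α - 3β` is a root
  have no3 : ∀ x y : V, x ∈ R → B x x ≠ 0 → B x y = 0 → B y x = 0 → B y y = - B x x →
      (3 : K) • x + y ∉ R := by
    intro x y hx hx0 hxy hyx hyy hm
    have hn : B ((3 : K) • x + y) ((3 : K) • x + y) = 8 * B x x := by
      simp only [map_add, map_smul, LinearMap.add_apply, LinearMap.smul_apply, smul_eq_mul,
        hxy, hyx, hyy]
      ring
    obtain ⟨n, e, -⟩ := exists_cartan hR hm (by rw [hn]; simpa using hx0) hx
    rw [hn] at e
    simp only [map_add, map_smul, LinearMap.add_apply, LinearMap.smul_apply, smul_eq_mul,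
      hyx] at e
    have : (3 : K) = 4 * n := mul_right_cancel₀ hx0 (by linear_combination e / 2)
    have : (3 : ℤ) = 4 * n := by exact_mod_cast this
    omega
  obtain ⟨r, hr, -, hr2⟩ := hR.reflect_iso δ hδ hδ0
  have r1 : r ((2 : K) • α) = α - β := by
    have hm := hr.mapsTo hα2
    rcases hr2 _ hα2 (by simpa [hδα] using hN) with e | e
    · rw [e, hδe'] at hm
      refine absurd ?_ (no3 α β hα hN h hβα hMN)
      convert hm using 1
      module
    · rw [e, hδe']
      module
  have hβ2' := hR.neg_mem _ hβ2
  have r2 : r (-((2 : K) • β)) = α - β := by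
    have hm := hr.mapsTo hβ2'
    rcases hr2 _ hβ2' (by simpa [hδβ] using hM) with e | e
    · rw [e, hδe']
      module
    · rw [e, hδe'] at hm
      have hm := hR.neg_mem _ hm
      refine absurd ?_ (no3 β α hβ hM hβα h (by rw [hMN, neg_neg]))
      convert hm using 1
      module
  have := hr.injOn hα2 hβ2' (r1.trans r2.symm)
  have h3 := congrArg (B α) this
  simp only [map_smul, map_neg, h, smul_eq_mul] at h3
  exact hN (by simpa using h3)

/-- An isotropic root `δ` not orthogonal to an odd real root `α` satisfies `k_{α,δ} = ±2`. -/
lemma odd_iso_sign (hR : IsGRRS B R) (hB : ∀ x y : V, B x y = B y x) {α δ : V}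
    (hα : α ∈ R) (hN : B α α ≠ 0) (hα2 : (2 : K) • α ∈ R) (hδ : δ ∈ R) (hδ0 : B δ δ = 0)
    (h : B α δ ≠ 0) : (B α δ = B α α ∧ α - δ ∈ R) ∨ (B α δ = -B α α ∧ α + δ ∈ R) := by
  obtain ⟨k, hk, -⟩ := exists_cartan hR hα hN hδ
  obtain ⟨m, hm⟩ := even_cartan hR hN hα2 hδ hk
  have hk0 : k ≠ 0 := by
    rintro rfl
    exact h (by simpa using hk)
  rcases iso_cartan hR hB hα hN hδ hδ0 hk hk0 with ⟨h1, h2⟩ | ⟨h1, h2⟩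
  · have : k = 2 := by omega
    subst this
    exact Or.inl ⟨by push_cast at hk; linear_combination hk / 2, h2⟩
  · have : k = -2 := by omega
    subst this
    exact Or.inr ⟨by push_cast at hk; linear_combination hk / 2, h2⟩

lemma exists_real_common (hR : IsGRRS B R) (hB : ∀ x y : V, B x y = B y x)
    (hirr : GRRSIrreducible B R) {α β : V} (hα : α ∈ R) (hβ : β ∈ R)
    (hαodd : IsOddRoot B R α) (hβodd : IsOddRoot B R β) (h : B α β = 0) :
    ∃ γ ∈ R, B γ γ ≠ 0 ∧ B γ α ≠ 0 ∧ B γ β ≠ 0 := by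
  obtain ⟨δ, hδ, h1, h2⟩ := exists_common hR hB hirr hα hβ h
  by_cases hδ0 : B δ δ = 0
  swap
  · exact ⟨δ, hδ, hδ0, by rwa [hB], by rwa [hB]⟩
  by_cases hN : B α α = 0
  · exact exists_real_of_iso hR hB hα hN h hδ hδ0 h1 h2
  by_cases hM : B β β = 0
  · obtain ⟨γ, a, b, c, d⟩ := exists_real_of_iso hR hB hβ hM (by rw [hB, h]) hδ hδ0 h2 h1
    exact ⟨γ, a, b, d, c⟩
  exfalso
  have hα2 := hαodd.resolve_left hN
  have hβ2 := hβodd.resolve_left hM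
  have hβn := hR.neg_mem _ hβ
  have hβ2n : (2 : K) • (-β) ∈ R := by rw [smul_neg]; exact hR.neg_mem _ hβ2
  have hδn := hR.neg_mem _ hδ
  rcases odd_iso_sign hR hB hα hN hα2 hδ hδ0 h1 with ⟨a1, a2⟩ | ⟨a1, a2⟩ <;>
  rcases odd_iso_sign hR hB hβ hM hβ2 hδ hδ0 h2 with ⟨b1, b2⟩ | ⟨b1, b2⟩
  · exact no_iso_between_real hR hB hα hN hα2 hβ hM hβ2 h hδ hδ0 a1 b1 a2 b2
  · refine no_iso_between_real hR hB hα hN hα2 hβn (by simpa using hM) hβ2n (by simpa using h)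
      hδ hδ0 a1 (by simp [b1]) a2 ?_
    convert hR.neg_mem _ b2 using 1
    module
  · refine no_iso_between_real hR hB hα hN hα2 hβn (by simpa using hM) hβ2n (by simpa using h)
      hδn (by simpa using hδ0) (by simp [a1]) (by simp [b1]) (by simpa using a2) ?_
    convert hR.neg_mem _ b2 using 1
    module
  · exact no_iso_between_real hR hB hα hN hα2 hβ hM hβ2 h hδn (by simpa using hδ0)
      (by simp [a1]) (by simp [b1]) (by simpa using a2) (by simpa using b2)

/-! ### Rigidity of the joining root -/

/-- Let `ε, ε'` and `τ, τ'` be pairs of real roots of norms `N` and `-N` with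
`k_{ε,ε'} + k_{τ,τ'} = 4`.  Both Cartan integers are at most `2`, so `k_{ε,ε'} = 2`
and `ε = ε'`. -/
lemma eq_of_opposite_pair (hR : IsGRRS B R) (hB : ∀ x y : V, B x y = B y x) {ε ε' τ τ' : V}
    (hε : ε ∈ R) (hN : B ε ε ≠ 0) (hε' : ε' ∈ R) (hN' : B ε' ε' = B ε ε)
    (hτ : τ ∈ R) (hτ' : τ' ∈ R) (n : B τ τ = - B ε ε) (n' : B τ' τ' = - B ε ε)
    (h : B τ τ' = B ε ε' - 2 * B ε ε) : ε = ε' := by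
  obtain ⟨m, hm, -⟩ := exists_cartan hR hε hN hε'
  have b1 := cartan_bounds_of_norm_eq hB hR hε hN hε' hN' hm
  have b2 := cartan_bounds_of_norm_eq hB hR hτ (by simpa [n] using hN) hτ' (by rw [n, n'])
    (a := 4 - m) (by rw [h, n]; push_cast; linear_combination hm)
  have : m = 2 := by omega
  subst this
  exact eq_of_cartan_two hR hB hε hN hε' hN' (by push_cast at hm; linear_combination hm / 2)

/-- For orthogonal isotropic `α`, `β` with `k_{γ,α} = k_{γ,β} = 1`, the vector `γ - α - β` is
a root. -/
lemma iso_iso_partner (hR : IsGRRS B R) (hB : ∀ x y : V, B x y = B y x) {α β γ : V}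
    (hα : α ∈ R) (hα0 : B α α = 0) (hβ : β ∈ R) (hβ0 : B β β = 0) (h : B α β = 0) (hne : α ≠ β)
    (hγ : γ ∈ R) (hN : B γ γ ≠ 0) (h1 : 2 * B γ α = B γ γ) (h2 : 2 * B γ β = B γ γ) :
    γ - α - β ∈ R := by
  have h' : B β α = 0 := by rw [hB, h]
  have hαγ : B α γ = B γ α := hB _ _
  have hβγ : B β γ = B γ β := hB _ _
  have hm : γ - α ∈ R := by
    have := hR.neg_mem _ (sub_smul_mem hR hγ hN hα (c := 1) (by rw [h1, one_mul]))
    convert this using 1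
    module
  have hb : B β (γ - α) ≠ 0 := by
    rw [map_sub, h', sub_zero, hβγ]
    intro h0
    rw [h0, mul_zero] at h2
    exact hN h2.symm
  rcases add_or_sub_mem hR hβ hβ0 hm hb with e | e
  · -- `γ - α + β` has the norm of `γ` and Cartan integer `2` with it
    have := eq_of_cartan_two hR hB hγ hN e
      (by simp only [map_add, map_sub, LinearMap.add_apply, LinearMap.sub_apply, h', h, hα0, hβ0,
            hαγ, hβγ]
          linear_combination h2 - h1)
      (by simp only [map_add, map_sub]
          linear_combination (h2 - h1) / 2)
    refine absurd ?_ hne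
    have h3 : α - β = 0 := by
      have : γ - (γ - α + β) = 0 := sub_eq_zero.2 this
      rw [← this]; module
    exact sub_eq_zero.1 h3
  · exact e

/-- The case `k_{γ,α} = 2`, `k_{γ,β} = 1` does not occur for orthogonal isotropic `α`, `β`:
`2γ - α` is isotropic and pairs nontrivially with `β`, but neither sum nor difference
has integral Cartan integers. -/
lemma iso_iso_no_two_one (hR : IsGRRS B R) (hB : ∀ x y : V, B x y = B y x) {α β γ : V}
    (hα : α ∈ R) (hα0 : B α α = 0) (hβ : β ∈ R) (hβ0 : B β β = 0) (h : B α β = 0)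
    (hγ : γ ∈ R) (hN : B γ γ ≠ 0) (h1 : B γ α = B γ γ) (hγα : γ - α ∈ R)
    (h2 : 2 * B γ β = B γ γ) : False := by
  have h' : B β α = 0 := by rw [hB, h]
  have hαγ : B α γ = B γ γ := by rw [hB, h1]
  have h2' : B γ β = B γ γ / 2 := by linear_combination h2 / 2
  have hβγ : B β γ = B γ γ / 2 := by rw [hB, h2']
  have hm : (2 : K) • γ - α ∈ R := by
    have := hR.neg_mem _ (sub_smul_mem hR hγ hN hα (c := 2) (by rw [h1]))
    convert this using 1
    module
  have hm0 : B ((2 : K) • γ - α) ((2 : K) • γ - α) = 0 := by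
    simp only [map_sub, map_smul, LinearMap.sub_apply, LinearMap.smul_apply, smul_eq_mul,
      h1, hαγ, hα0]
    ring
  have hb : B ((2 : K) • γ - α) β ≠ 0 := by
    simp only [map_sub, map_smul, LinearMap.sub_apply, LinearMap.smul_apply, smul_eq_mul,
      h2, h, sub_zero]
    exact hN
  rcases add_or_sub_mem hR hm hm0 hβ hb with e | e
  · have hn : B (β + ((2 : K) • γ - α)) (β + ((2 : K) • γ - α)) = 2 * B γ γ := by
      simp only [map_add, map_sub, map_smul, LinearMap.add_apply, LinearMap.sub_apply,
        LinearMap.smul_apply, smul_eq_mul, h1, h2', hβγ, hαγ, hα0, hβ0, h, h']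
      ring
    obtain ⟨n, hn', -⟩ := exists_cartan hR e (by rw [hn]; simpa using hN) hγ
    rw [hn] at hn'
    simp only [map_add, map_sub, map_smul, LinearMap.add_apply, LinearMap.sub_apply,
        LinearMap.smul_apply, smul_eq_mul, hβγ, hαγ] at hn'
    have : (3 : K) = 2 * n := mul_right_cancel₀ hN (by linear_combination hn')
    have : (3 : ℤ) = 2 * n := by exact_mod_cast this
    omega
  · have hn : B (β - ((2 : K) • γ - α)) (β - ((2 : K) • γ - α)) = -2 * B γ γ := by
      simp only [map_sub, map_smul, LinearMap.sub_apply,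
        LinearMap.smul_apply, smul_eq_mul, h1, h2', hβγ, hαγ, hα0, hβ0, h, h']
      ring
    obtain ⟨n, hn', -⟩ := exists_cartan hR e (by rw [hn]; simpa using hN) hγα
    rw [hn] at hn'
    simp only [map_sub, map_smul, LinearMap.sub_apply,
        LinearMap.smul_apply, smul_eq_mul, hβγ, hαγ, h1, hα0, h'] at hn'
    have : (3 : K) = -2 * n := mul_right_cancel₀ hN (by linear_combination hn')
    have : (3 : ℤ) = -2 * n := by exact_mod_cast this
    omega

/-- For orthogonal, distinct isotropic `α`, `β`, a real root pairing with both
positively has Cartan integers `k_{γ,α} = k_{γ,β} = 1`. -/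
lemma iso_iso_cartan (hR : IsGRRS B R) (hB : ∀ x y : V, B x y = B y x) {α β γ : V}
    (hα : α ∈ R) (hα0 : B α α = 0) (hβ : β ∈ R) (hβ0 : B β β = 0) (h : B α β = 0) (hne : α ≠ β)
    (hγ : γ ∈ R) (hN : B γ γ ≠ 0) {k l : ℤ} (hk : 2 * B γ α = k * B γ γ)
    (hl : 2 * B γ β = l * B γ γ) (hk1 : 0 < k) (hl1 : 0 < l) : k = 1 ∧ l = 1 := by
  rcases iso_cartan hR hB hγ hN hα hα0 hk hk1.ne' with ⟨a, a'⟩ | ⟨a, -⟩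
  swap
  · omega
  rcases iso_cartan hR hB hγ hN hβ hβ0 hl hl1.ne' with ⟨b, b'⟩ | ⟨b, -⟩
  swap
  · omega
  rcases a with rfl | rfl <;> rcases b with rfl | rfl
  · exact ⟨rfl, rfl⟩
  · push_cast at hk hl
    exact (iso_iso_no_two_one hR hB hβ hβ0 hα hα0 (by rw [hB, h]) hγ hN
      (by linear_combination hl / 2) b' (by linear_combination hk)).elim
  · push_cast at hk hl
    exact (iso_iso_no_two_one hR hB hα hα0 hβ hβ0 h hγ hN
      (by linear_combination hk / 2) a' (by linear_combination hl)).elim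
  · -- `γ - α` and `γ - β` have the same norm and Cartan integer `2`
    push_cast at hk hl
    have h1 : B γ α = B γ γ := by linear_combination hk / 2
    have h2 : B γ β = B γ γ := by linear_combination hl / 2
    have h1' : B α γ = B γ γ := by rw [hB, h1]
    have h2' : B β γ = B γ γ := by rw [hB, h2]
    have n1 : B (γ - α) (γ - α) = - B γ γ := by
      simp only [map_sub, LinearMap.sub_apply, h1, h1', hα0]; ring
    have := eq_of_cartan_two hR hB a' (by rw [n1]; exact neg_ne_zero.2 hN) b'
      (by rw [n1]; simp only [map_sub, LinearMap.sub_apply, h2, h2', hβ0]; ring)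
      (by rw [n1]; simp only [map_sub, LinearMap.sub_apply, h2, h1', h]; ring)
    exact absurd (sub_right_injective this) hne

/-- A real root `γ` with `k_{γ,α} > 0`, where `α` is an odd real root, satisfies
`(γ,γ) = 2(α,α)` and `(γ,α) = (α,α)`.  The vector `β` only excludes that `γ` is proportional to
`α`. -/
lemma odd_real_cartan (hR : IsGRRS B R) (hB : ∀ x y : V, B x y = B y x) {α β γ : V}
    (hα : α ∈ R) (hN : B α α ≠ 0) (hα2 : (2 : K) • α ∈ R) (h : B α β = 0)
    (hγ : γ ∈ R) (hM : B γ γ ≠ 0) (h2 : B γ β ≠ 0) {k : ℤ}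
    (hk : 2 * B γ α = k * B γ γ) (hk1 : 0 < k) : B γ γ = 2 * B α α ∧ B γ α = B α α := by
  obtain ⟨a, ha, -⟩ := exists_cartan hR hα hN hγ
  have hb := cartan_mul_bounds hB hR hα hN hγ hM ha (b := k) (by rw [hB α γ]; exact hk)
  obtain ⟨m, rfl⟩ := even_cartan hR hN hα2 hγ ha
  rw [hB α γ] at ha
  have hm0 : m ≠ 0 := by
    rintro rfl
    have h0 : (k : K) * B γ γ = 0 := by rw [← hk, ha]; simp
    rcases mul_eq_zero.1 h0 with h0 | h0
    · have : k = 0 := by exact_mod_cast h0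
      omega
    · exact hM h0
  push_cast at ha
  have hm1 : 0 < m := by
    by_contra! hlt
    have : m < 0 := lt_of_le_of_ne hlt hm0
    nlinarith [hb.1, mul_pos hk1 (neg_pos.2 this)]
  have hm2 : m * k ≤ 2 := by nlinarith [hb.2]
  have hkm : (k = 1 ∧ m = 1) ∨ (k = 1 ∧ m = 2) ∨ (k = 2 ∧ m = 1) := by
    have : k ≤ 2 := by nlinarith
    have : m ≤ 2 := by nlinarith
    interval_cases k <;> interval_cases m <;> simp_all
  rcases hkm with ⟨rfl, rfl⟩ | ⟨rfl, rfl⟩ | ⟨rfl, rfl⟩ <;> push_cast at ha hk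
  · exact ⟨by linear_combination ha - hk, by linear_combination ha / 2⟩
  · exfalso
    have e := eq_of_cartan_two hR hB hα2 (by simpa using hN) hγ
      (by simp only [map_smul, LinearMap.smul_apply, smul_eq_mul]
          linear_combination ha - hk)
      (by simp only [map_smul, LinearMap.smul_apply, smul_eq_mul]
          rw [hB α γ]
          linear_combination ha)
    exact h2 (by rw [← e]; simp [h])
  · exfalso
    have e := eq_of_cartan_two hR hB hα hN hγ (by linear_combination (ha - hk) / 2)
      (by rw [hB α γ]; linear_combination ha / 2)
    exact h2 (by rw [← e]; exact h)

/-- A nonzero Cartan integer becomes positive after changing the sign of the second root. -/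
lemma exists_pos_cartan (hR : IsGRRS B R) {γ α : V} (hγ : γ ∈ R) (hN : B γ γ ≠ 0) (hα : α ∈ R)
    (h : B γ α ≠ 0) : (∃ k : ℤ, 0 < k ∧ 2 * B γ α = k * B γ γ) ∨
      (∃ k : ℤ, 0 < k ∧ 2 * B γ (-α) = k * B γ γ) := by
  obtain ⟨k, hk, -⟩ := exists_cartan hR hγ hN hα
  rcases lt_trichotomy k 0 with h0 | rfl | h0
  · exact Or.inr ⟨-k, by omega, by push_cast; rw [map_neg]; linear_combination -hk⟩
  · exact absurd (by simpa using hk) h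
  · exact Or.inl ⟨k, h0, hk⟩

lemma isOddRoot_neg (hR : IsGRRS B R) {α : V} (h : IsOddRoot B R α) : IsOddRoot B R (-α) := by
  rcases h with h | h
  · exact Or.inl (by simpa using h)
  · exact Or.inr (by rw [smul_neg]; exact hR.neg_mem _ h)

/-- A real root pairing positively with an odd real `α` and an isotropic `β`, where `(α,β) = 0`,
is fixed by `θ`. -/
lemma fixed_of_real_iso (hR : IsGRRS B R) (hB : ∀ x y : V, B x y = B y x)
    (θ : V ≃ₗ[K] V) (hθB : ∀ x y : V, B (θ x) (θ y) = B x y) (hθR : ∀ x ∈ R, θ x ∈ R)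
    {α β γ : V} (hα : α ∈ R) (hN : B α α ≠ 0) (hα2 : (2 : K) • α ∈ R)
    (hβ : β ∈ R) (hβ0 : B β β = 0) (h : B α β = 0) (hαfix : θ α = α) (hβfix : θ β = β)
    (hγ : γ ∈ R) (hM : B γ γ ≠ 0) {k l : ℤ}
    (hk : 2 * B γ α = k * B γ γ) (hl : 2 * B γ β = l * B γ γ) (hk1 : 0 < k) (hl1 : 0 < l) :
    θ γ = γ := by
  have hγβ : B γ β ≠ 0 := by
    intro h0
    rw [h0, mul_zero, eq_comm] at hl
    rcases mul_eq_zero.1 hl with h0 | h0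
    · have : l = 0 := by exact_mod_cast h0
      omega
    · exact hM h0
  obtain ⟨e1, e2⟩ := odd_real_cartan hR hB hα hN hα2 h hγ hM hγβ hk hk1
  have e2' : B α γ = B α α := by rw [hB, e2]
  have hε : γ - α ∈ R := by
    have := hR.neg_mem _ (sub_smul_mem hR hγ hM hα (c := 1) (by rw [e2, e1, one_mul]))
    convert this using 1
    module
  have nε : B (γ - α) (γ - α) = B α α := by
    simp only [map_sub, LinearMap.sub_apply, e1, e2, e2']; ring
  have nε0 : B (γ - α) (γ - α) ≠ 0 := by rwa [nε]
  have hεβ : 2 * B (γ - α) β = ((2 * l : ℤ) : K) * B (γ - α) (γ - α) := by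
    rw [nε]
    simp only [map_sub, LinearMap.sub_apply, h, sub_zero]
    push_cast
    linear_combination hl + l * e1
  rcases iso_cartan hR hB hε nε0 hβ hβ0 hεβ (by omega) with ⟨c, hτ⟩ | ⟨c, -⟩
  swap
  · omega
  have hl' : l = 1 := by omega
  subst hl'
  have hb : B (γ - α) β = B α α := by
    rw [nε] at hεβ
    push_cast at hεβ
    linear_combination hεβ / 2
  have hb' : B β (γ - α) = B α α := by rw [hB, hb]
  set ε := γ - α with hεdef
  have hε'β : B (θ ε) β = B α α := by rw [← hβfix, hθB, hb]
  have hβε' : B β (θ ε) = B α α := by rw [hB, hε'β]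
  have hτ' := hθR _ hτ
  rw [map_sub, hβfix] at hτ'
  have hfix : ε = θ ε := by
    refine eq_of_opposite_pair hR hB hε nε0 (hθR _ hε) (hθB _ _) hτ hτ' ?_ ?_ ?_
    · simp only [map_sub, LinearMap.sub_apply, hb, hb', hβ0, nε]; ring
    · simp only [map_sub, LinearMap.sub_apply, hε'β, hβε', hβ0, nε, hθB]; ring
    · simp only [map_sub, LinearMap.sub_apply, hb, hβε', hβ0, nε]; ring
  have : γ = ε + α := by rw [hεdef]; module
  rw [this, map_add, ← hfix, hαfix]

/-- A real root pairing positively with orthogonal distinct isotropic roots `α`, `β` is fixed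
by `θ`. -/
lemma fixed_of_iso_iso (hR : IsGRRS B R) (hB : ∀ x y : V, B x y = B y x)
    (θ : V ≃ₗ[K] V) (hθB : ∀ x y : V, B (θ x) (θ y) = B x y) (hθR : ∀ x ∈ R, θ x ∈ R)
    {α β γ : V} (hα : α ∈ R) (hα0 : B α α = 0) (hβ : β ∈ R) (hβ0 : B β β = 0) (h : B α β = 0)
    (hne : α ≠ β) (hαfix : θ α = α) (hβfix : θ β = β)
    (hγ : γ ∈ R) (hN : B γ γ ≠ 0) {k l : ℤ}
    (hk : 2 * B γ α = k * B γ γ) (hl : 2 * B γ β = l * B γ γ) (hk1 : 0 < k) (hl1 : 0 < l) :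
    θ γ = γ := by
  obtain ⟨rfl, rfl⟩ := iso_iso_cartan hR hB hα hα0 hβ hβ0 h hne hγ hN hk hl hk1 hl1
  push_cast at hk hl
  rw [one_mul] at hk hl
  have hτ := iso_iso_partner hR hB hα hα0 hβ hβ0 h hne hγ hN hk hl
  have hτ' := hθR _ hτ
  rw [map_sub, map_sub, hαfix, hβfix] at hτ'
  have h' : B β α = 0 := by rw [hB, h]
  have c1 : B γ α = B γ γ / 2 := by linear_combination hk / 2
  have c2 : B γ β = B γ γ / 2 := by linear_combination hl / 2
  have c1' : B α γ = B γ γ / 2 := by rw [hB, c1]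
  have c2' : B β γ = B γ γ / 2 := by rw [hB, c2]
  have d1 : B (θ γ) α = B γ γ / 2 := by rw [← c1, ← hθB γ α, hαfix]
  have d2 : B (θ γ) β = B γ γ / 2 := by rw [← c2, ← hθB γ β, hβfix]
  have d1' : B α (θ γ) = B γ γ / 2 := by rw [hB, d1]
  have d2' : B β (θ γ) = B γ γ / 2 := by rw [hB, d2]
  symm
  refine eq_of_opposite_pair hR hB hγ hN (hθR _ hγ) (hθB _ _) hτ hτ' ?_ ?_ ?_
  · simp only [map_sub, LinearMap.sub_apply, c1, c2, c1', c2', hα0, hβ0, h, h']; ring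
  · simp only [map_sub, LinearMap.sub_apply, d1, d2, d1', d2', hα0, hβ0, h, h', hθB]; ring
  · simp only [map_sub, LinearMap.sub_apply, d1', d2', h', c1, c2, hα0, hβ0, h]; ring

/-- A real root pairing positively with orthogonal odd real roots `α`, `β` equals `α + β`. -/
lemma eq_add_of_real_real (hR : IsGRRS B R) (hB : ∀ x y : V, B x y = B y x)
    {α β γ : V} (hα : α ∈ R) (hN : B α α ≠ 0) (hα2 : (2 : K) • α ∈ R)
    (hβ : β ∈ R) (hM : B β β ≠ 0) (hβ2 : (2 : K) • β ∈ R) (h : B α β = 0)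
    (hγ : γ ∈ R) (hγ0 : B γ γ ≠ 0) (h1 : B γ α ≠ 0) (h2 : B γ β ≠ 0) {k l : ℤ}
    (hk : 2 * B γ α = k * B γ γ) (hl : 2 * B γ β = l * B γ γ) (hk1 : 0 < k) (hl1 : 0 < l) :
    γ = α + β := by
  obtain ⟨e1, e2⟩ := odd_real_cartan hR hB hα hN hα2 h hγ hγ0 h2 hk hk1
  obtain ⟨f1, f2⟩ := odd_real_cartan hR hB hβ hM hβ2 (by rw [hB, h]) hγ hγ0 h1 hl hl1
  have hMN : B β β = B α α := by linear_combination (e1 - f1) / 2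
  have e2' : B α γ = B α α := by rw [hB, e2]
  have f2' : B β γ = B α α := by rw [hB, f2, hMN]
  have h' : B β α = 0 := by rw [hB, h]
  have hε : γ - α ∈ R := by
    have := hR.neg_mem _ (sub_smul_mem hR hγ hγ0 hα (c := 1) (by rw [e2, e1, one_mul]))
    convert this using 1
    module
  have := eq_of_cartan_two hR hB hβ hM hε
    (by simp only [map_sub, LinearMap.sub_apply, e1, e2, e2', hMN]; ring)
    (by simp only [map_sub, f2', h', hMN]; ring)
  rw [this]
  module

/-- A real root not orthogonal to either of two distinct, non-opposite, orthogonal odd roots fixed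
by `θ` is itself fixed by `θ`. -/
lemma fixed_of_orthogonal (hR : IsGRRS B R) (hB : ∀ x y : V, B x y = B y x)
    (θ : V ≃ₗ[K] V) (hθB : ∀ x y : V, B (θ x) (θ y) = B x y) (hθR : ∀ x ∈ R, θ x ∈ R)
    {α β γ : V} (hα : α ∈ R) (hβ : β ∈ R) (hαodd : IsOddRoot B R α) (hβodd : IsOddRoot B R β)
    (hαfix : θ α = α) (hβfix : θ β = β) (h : B α β = 0) (hne : α ≠ β) (hne' : α ≠ -β)
    (hγ : γ ∈ R) (hγ0 : B γ γ ≠ 0) (h1 : B γ α ≠ 0) (h2 : B γ β ≠ 0) : θ γ = γ := by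
  have main : ∀ {α β : V}, α ∈ R → β ∈ R → IsOddRoot B R α → IsOddRoot B R β →
      θ α = α → θ β = β → B α β = 0 → α ≠ β → B γ α ≠ 0 → B γ β ≠ 0 → ∀ {k l : ℤ},
      2 * B γ α = k * B γ γ → 2 * B γ β = l * B γ γ → 0 < k → 0 < l → θ γ = γ := by
    intro α β hα hβ hαodd hβodd hαfix hβfix h hne h1 h2 k l hk hl hk1 hl1
    by_cases hN : B α α = 0 <;> by_cases hM : B β β = 0
    · exact fixed_of_iso_iso hR hB θ hθB hθR hα hN hβ hM h hne hαfix hβfix hγ hγ0 hk hl hk1 hl1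
    · exact fixed_of_real_iso hR hB θ hθB hθR hβ hM (hβodd.resolve_left hM) hα hN (by rw [hB, h])
        hβfix hαfix hγ hγ0 hl hk hl1 hk1
    · exact fixed_of_real_iso hR hB θ hθB hθR hα hN (hαodd.resolve_left hN) hβ hM h
        hαfix hβfix hγ hγ0 hk hl hk1 hl1
    · rw [eq_add_of_real_real hR hB hα hN (hαodd.resolve_left hN) hβ hM (hβodd.resolve_left hM)
        h hγ hγ0 h1 h2 hk hl hk1 hl1, map_add, hαfix, hβfix]
  have hαn := hR.neg_mem _ hα
  have hβn := hR.neg_mem _ hβ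
  have hαo := isOddRoot_neg hR hαodd
  have hβo := isOddRoot_neg hR hβodd
  rcases exists_pos_cartan hR hγ hγ0 hα h1 with ⟨k, hk1, hk⟩ | ⟨k, hk1, hk⟩ <;>
  rcases exists_pos_cartan hR hγ hγ0 hβ h2 with ⟨l, hl1, hl⟩ | ⟨l, hl1, hl⟩
  · exact main hα hβ hαodd hβodd hαfix hβfix h hne h1 h2 hk hl hk1 hl1
  · exact main hα hβn hαodd hβo hαfix (by simp [hβfix]) (by simp [h]) hne' h1 (by simpa using h2)
      hk hl hk1 hl1
  · exact main hαn hβ hαo hβodd (by simp [hαfix]) hβfix (by simp [h])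
      (fun e => hne' (by rw [← e, neg_neg])) (by simpa using h1) h2 hk hl hk1 hl1
  · exact main hαn hβn hαo hβo (by simp [hαfix]) (by simp [hβfix]) (by simp [h])
      (fun e => hne (neg_injective e)) (by simpa using h1) (by simpa using h2) hk hl hk1 hl1

end Helpers

/-- if `θ` is an automorphism of an irreducible GRRS `R` and `α, β` are
linearly independent odd roots fixed by `θ`, then there is a `θ`-fixed real root `γ`
with `(γ, α) ≠ 0` and `(γ, β) ≠ 0`. -/
theorem odd_connectedness {K V : Type*} [Field K] [CharZero K]
    [AddCommGroup V] [Module K V] [FiniteDimensional K V]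
    (B : LinearMap.BilinForm K V) (hB : ∀ x y : V, B x y = B y x)
    (R : Set V) (hR : IsGRRS B R) (hirr : GRRSIrreducible B R)
    (θ : V ≃ₗ[K] V) (hθB : ∀ x y : V, B (θ x) (θ y) = B x y) (hθR : θ '' R = R)
    (α β : V) (hα : α ∈ R) (hβ : β ∈ R)
    (hαodd : IsOddRoot B R α) (hβodd : IsOddRoot B R β)
    (hαfix : θ α = α) (hβfix : θ β = β)
    (hli : LinearIndependent K ![α, β]) :
    ∃ γ ∈ R, B γ γ ≠ 0 ∧ θ γ = γ ∧ B γ α ≠ 0 ∧ B γ β ≠ 0 := by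
  have hθR' : ∀ x ∈ R, θ x ∈ R := fun x hx => hθR ▸ Set.mem_image_of_mem θ hx
  by_cases h : B α β = 0
  · obtain ⟨γ, hγ, hγ0, h1, h2⟩ := exists_real_common hR hB hirr hα hβ hαodd hβodd h
    have hne : α ≠ β := by
      intro e
      have := LinearIndependent.pair_iff.1 hli 1 (-1) (by rw [e]; module)
      exact one_ne_zero this.1
    have hne' : α ≠ -β := by
      intro e
      have := LinearIndependent.pair_iff.1 hli 1 1 (by rw [e]; module)
      exact one_ne_zero this.1
    exact ⟨γ, hγ, hγ0, fixed_of_orthogonal hR hB θ hθB hθR' hα hβ hαodd hβodd hαfix hβfix h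
      hne hne' hγ hγ0 h1 h2, h1, h2⟩
  · have h' : B β α ≠ 0 := by rwa [hB]
    by_cases hN : B α α = 0
    swap
    · exact ⟨α, hα, hN, hαfix, hN, h⟩
    by_cases hM : B β β = 0
    swap
    · exact ⟨β, hβ, hM, hβfix, h', hM⟩
    rcases add_or_sub_mem hR hα hN hβ h with e | e
    · refine ⟨_, e, ?_, by rw [map_add, hαfix, hβfix], by simpa [hN] using h',
        by simpa [hM] using h⟩
      simp only [map_add, LinearMap.add_apply, hN, hM, hB β α]
      ring_nf
      exact mul_ne_zero h two_ne_zero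
    · refine ⟨_, e, ?_, by rw [map_sub, hαfix, hβfix], by simpa [hN] using h',
        by simpa [hM] using h⟩
      simp only [map_sub, LinearMap.sub_apply, hN, hM, hB β α]
      ring_nf
      simpa using h

end GRRS
end

section
/- Let R be an irreducible GRRS in V and θ an automorphism of R, with S the set of roots fixed by θ. If S is nonempty and either S contains two linearly independent odd roots or S contains no odd roots at all, then S is a GRRS in span(S). -/
/-!
Every axiom for the fixed set `S` is inherited at once from `R`, except that an isotropic `α ∈ S`
must be non-orthogonal to some element of `S`. If `S` has no odd roots there is nothing to check.
Otherwise there is an odd root `β ∈ S` with `β ≠ ±α`, and `α ⊥ β` may be assumed.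

By irreducibility some root `γ` is non-orthogonal to both `α` and `β`
(`exists_common_neighbour`), and it can be taken real. The claim is that
`γ` is itself fixed by `θ`. After changing signs, one finds `u`, one of
`α`, `β`, `α + β`, such that `u - γ` is a real root, `(u, γ) = (γ, γ)`, and the squares of
`γ` and `u - γ` have ratio `-1` or `-2`. Two real roots whose squares have negative rational ratio
are orthogonal, because the product of their Cartan integers is nonnegative (`cartan_bounds`).
Since `u` is fixed by `θ`, this gives `0 = (u - γ, θγ) = (γ, γ) - (γ, θγ)`, and two real roots `x`, `y` of a finite
system with `(x, x) = (x, y) = (y, y)` coincide (`eq_of_form_eq`); hence `θγ = γ`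
(`fixed_of_complement`).

The bounds on Cartan integers come from Mathlib's theory of finite crystallographic root pairings,
applied to the real roots (`realPairing`).
-/

namespace GRRS

open Submodule

variable {K V : Type*} [Field K] [CharZero K] [AddCommGroup V] [Module K V]

/-! ### Real roots as a root pairing -/

section Helpers

set_option linter.unusedSectionVars false

variable {B : LinearMap.BilinForm K V} {R : Set V}

/-- If `x`, `y` are real roots with `(x, x) = (x, y) = (y, y)`, then the reflection in `y` shows that
`2y - x` is a root, and iterating yields the arithmetic progression `x + n(y - x)` in `R`. Finiteness
forces `x = y`. -/
lemma eq_of_form_eq (hB : ∀ x y : V, B x y = B y x) (hR : IsGRRS B R) {x y : V}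
    (hx : x ∈ R) (hy : y ∈ R) {c : K} (hc : c ≠ 0) (hxx : B x x = c) (hyy : B y y = c)
    (hxy : B x y = c) : x = y := by
  by_contra hne
  have hyx : B y x = c := by rw [hB, hxy]
  have key : ∀ n : ℕ, x + (n : K) • (y - x) ∈ R ∧ x + ((n + 1 : ℕ) : K) • (y - x) ∈ R := by
    intro n
    induction n with
    | zero => simpa using ⟨hx, hy⟩
    | succ n ih =>
      refine ⟨ih.2, ?_⟩
      set p := x + (n : K) • (y - x) with hp
      set q := x + ((n + 1 : ℕ) : K) • (y - x) with hq
      have hqq : B q q = c := by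
        simp only [hq, map_add, map_sub, map_smul, LinearMap.add_apply, LinearMap.sub_apply,
          LinearMap.smul_apply, hxx, hyy, hxy, hyx]
        simp
      have hqp : B q p = c := by
        simp only [hp, hq, map_add, map_sub, map_smul, LinearMap.add_apply, LinearMap.sub_apply,
          LinearMap.smul_apply, hxx, hyy, hxy, hyx]
        simp
      obtain ⟨m, hm, hmem⟩ := hR.reflect_real q ih.2 (hqq ▸ hc) p ih.1
      rw [hqq, hqp] at hm
      rw [← mul_right_cancel₀ hc hm] at hmem
      convert hR.neg_mem _ hmem using 1
      rw [hp, hq]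
      push_cast
      module
  refine Set.infinite_of_injective_forall_mem (f := fun n : ℕ => x + (n : K) • (y - x)) ?_
    (fun n => (key n).1) hR.finite
  intro m n hmn
  have := smul_left_injective K (sub_ne_zero.mpr (Ne.symm hne)) (add_left_cancel hmn)
  exact_mod_cast this

/-- The coroot `2(x, ·)/(x, x)` attached to a non-isotropic vector `x`. -/
def corootOf (B : LinearMap.BilinForm K V) (x : V) : Module.Dual K V :=
  (2 / B x x) • B x

lemma reflect_mem (hR : IsGRRS B R) {x y : V} (hx : x ∈ R) (hxx : B x x ≠ 0) (hy : y ∈ R) :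
    y - (2 * B x y / B x x) • x ∈ R := by
  obtain ⟨n, hn, hmem⟩ := hR.reflect_real x hx hxx y hy
  rwa [hn, mul_div_cancel_right₀ _ hxx]

lemma form_reflect (hB : ∀ x y : V, B x y = B y x) {x y : V} (hxx : B x x ≠ 0) :
    B (y - (2 * B x y / B x x) • x) (y - (2 * B x y / B x x) • x) = B y y := by
  simp only [map_sub, map_smul, LinearMap.sub_apply, LinearMap.smul_apply, smul_eq_mul, hB y x]
  field_simp
  ring

/-- The real roots of a GRRS, with the coroots `2(x, ·)/(x, x)`, as a root pairing between `V` and its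
dual. -/
noncomputable def realPairing [FiniteDimensional K V] [Finite (realRoots B R)]
    (hB : ∀ x y : V, B x y = B y x) (hR : IsGRRS B R) :
    RootPairing (realRoots B R) K V (Module.Dual K V) :=
  RootPairing.mk' (Module.Dual.eval K V)
    (Function.Embedding.subtype _)
    ⟨fun x => corootOf B x, by
      rintro ⟨x, hx, hxx⟩ ⟨y, hy, hyy⟩ h
      have h1 := LinearMap.congr_fun h x
      have h2 := LinearMap.congr_fun h y
      simp only [corootOf, LinearMap.smul_apply, smul_eq_mul] at h1 h2
      rw [hB y x] at h1
      field_simp at h1 h2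
      exact Subtype.ext (eq_of_form_eq hB hR hx hy hxx rfl (by rw [h1, ← h2]) h2)⟩
    (by
      rintro ⟨x, hx, hxx⟩
      simp [corootOf, hxx])
    (by
      rintro ⟨x, hx, hxx⟩ _ ⟨⟨y, hy, hyy⟩, rfl⟩
      refine ⟨⟨y - (2 * B x y / B x x) • x, reflect_mem hR hx hxx hy, ?_⟩, ?_⟩
      · rwa [form_reflect hB hxx]
      · simp [Module.preReflection_apply, corootOf, div_mul_eq_mul_div])
    (by
      rintro ⟨x, hx, hxx⟩ _ ⟨⟨y, hy, hyy⟩, rfl⟩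
      refine ⟨⟨y - (2 * B x y / B x x) • x, reflect_mem hR hx hxx hy, ?_⟩, ?_⟩
      · rwa [form_reflect hB hxx]
      · ext z
        simp only [Function.Embedding.coeFn_mk, Function.Embedding.subtype_apply,
          Module.preReflection_apply, corootOf, form_reflect hB hxx]
        simp only [map_sub, map_smul, LinearMap.sub_apply, LinearMap.smul_apply, smul_eq_mul,
          Module.Dual.eval_apply, hB y x]
        field_simp)

/-- The product of the two Cartan integers of a pair of real roots lies between `0` and `4`. -/
lemma cartan_bounds [FiniteDimensional K V] (hB : ∀ x y : V, B x y = B y x) (hR : IsGRRS B R)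
    {x y : V} (hx : x ∈ R) (hxx : B x x ≠ 0) (hy : y ∈ R) (hyy : B y y ≠ 0) :
    ∃ p q : ℤ, 2 * B x y = p * B x x ∧ 2 * B x y = q * B y y ∧ 0 ≤ p * q ∧ p * q ≤ 4 := by
  have : Finite (realRoots B R) := (hR.finite.subset (fun _ h => h.1)).to_subtype
  let P := realPairing hB hR
  have hP : ∀ i j : realRoots B R, P.pairing i j = 2 / B j.1 j.1 * B j.1 i.1 := fun i j => rfl
  have : P.IsCrystallographic := ⟨by
    rintro ⟨i, hi, hii⟩ ⟨j, hj, hjj⟩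
    obtain ⟨n, hn, -⟩ := hR.reflect_real j hj hjj i hi
    refine ⟨n, ?_⟩
    rw [hP]
    simp only [algebraMap_int_eq, eq_intCast]
    field_simp
    exact hn.symm⟩
  have h := P.coxeterWeightIn_mem_set_of_isCrystallographic ⟨x, hx, hxx⟩ ⟨y, hy, hyy⟩
  have h1 := P.algebraMap_pairingIn ℤ ⟨x, hx, hxx⟩ ⟨y, hy, hyy⟩
  have h2 := P.algebraMap_pairingIn ℤ ⟨y, hy, hyy⟩ ⟨x, hx, hxx⟩
  rw [hP] at h1 h2
  simp only [algebraMap_int_eq, eq_intCast] at h1 h2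
  refine ⟨P.pairingIn ℤ ⟨y, hy, hyy⟩ ⟨x, hx, hxx⟩,
    P.pairingIn ℤ ⟨x, hx, hxx⟩ ⟨y, hy, hyy⟩, ?_, ?_, ?_⟩
  · rw [h2]; field_simp
  · rw [h1, hB x y]; field_simp
  · rw [RootPairing.coxeterWeightIn] at h
    rw [mul_comm]
    simp only [Set.mem_insert_iff, Set.mem_singleton_iff] at h
    omega

/-- Real roots whose squares have negative ratio `-e` are orthogonal. -/
lemma orthogonal_of_neg [FiniteDimensional K V] (hB : ∀ x y : V, B x y = B y x)
    (hR : IsGRRS B R) {x y : V} (hx : x ∈ R) (hxx : B x x ≠ 0) (hy : y ∈ R) {e : ℕ}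
    (hyy : (e : K) * B y y = -B x x) : B x y = 0 := by
  have he : (e : K) ≠ 0 := by
    rintro h
    rw [h, zero_mul] at hyy
    exact hxx (neg_eq_zero.mp hyy.symm)
  have hyy0 : B y y ≠ 0 := by
    rintro h
    rw [h, mul_zero] at hyy
    exact hxx (neg_eq_zero.mp hyy.symm)
  obtain ⟨p, q, hp, hq, hpq, -⟩ := cartan_bounds hB hR hx hxx hy hyy0
  have h1 : (q : K) = ((-(e * p) : ℤ) : K) := by
    push_cast
    apply mul_right_cancel₀ hyy0
    linear_combination hp - hq + (p : K) * hyy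
  have h2 : q = -(e * p) := by exact_mod_cast h1
  have he' : (0 : ℤ) < e := by
    have : e ≠ 0 := by exact_mod_cast he
    omega
  have hp0 : p = 0 := by
    rw [h2] at hpq
    by_contra hne
    have : 0 < p * p := mul_self_pos.mpr hne
    nlinarith
  rw [hp0] at hp
  simpa using hp

/-! ### Real and isotropic roots -/

lemma add_or_sub_mem_s6 (hR : IsGRRS B R) {α β : V} (hα : α ∈ R) (hαα : B α α = 0) (hβ : β ∈ R)
    (h : B α β ≠ 0) : β + α ∈ R ∨ β - α ∈ R := by
  obtain ⟨r, hr, -, h2⟩ := hR.reflect_iso α hα hαα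
  have := hr.mapsTo hβ
  rcases h2 β hβ h with h | h <;> rw [h] at this
  · exact Or.inl this
  · exact Or.inr this

/-- For a real root `γ` and a non-orthogonal isotropic root `α`, the Cartan integer
`2(γ, α)/(γ, γ)` is `±1` or `±2`, and in the latter case `γ ∓ α` is a root. -/
lemma cartan_isotropic (hB : ∀ x y : V, B x y = B y x) (hR : IsGRRS B R) {γ α : V} (hγ : γ ∈ R)
    (hγγ : B γ γ ≠ 0) (hα : α ∈ R) (hαα : B α α = 0) (h : B γ α ≠ 0) :
    ∃ α', (α' = α ∨ α' = -α) ∧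
      (2 * B γ α' = B γ γ ∨ (B γ α' = B γ γ ∧ γ - α' ∈ R)) := by
  obtain ⟨α', hα', hmem⟩ : ∃ α', (α' = α ∨ α' = -α) ∧ γ - α' ∈ R := by
    rcases add_or_sub_mem_s6 hR hα hαα hγ (by rwa [hB]) with h | h
    · exact ⟨-α, Or.inr rfl, by simpa using h⟩
    · exact ⟨α, Or.inl rfl, h⟩
  refine ⟨α', hα', ?_⟩
  have hα'R : α' ∈ R := by rcases hα' with rfl | rfl; exacts [hα, hR.neg_mem _ hα]
  have h0 : B α' α' = 0 := by rcases hα' with rfl | rfl <;> simp [hαα]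
  have h' : B γ α' ≠ 0 := by rcases hα' with rfl | rfl <;> simpa using h
  obtain ⟨n, hn, -⟩ := hR.reflect_real γ hγ hγγ α' hα'R
  have hnorm : B (γ - α') (γ - α') = (1 - n) * B γ γ := by
    simp only [map_sub, LinearMap.sub_apply, h0, hB α' γ]
    linear_combination -hn
  by_cases h1 : n = 1
  · left; rw [hn, h1]; simp
  have h1' : (1 - n : K) ≠ 0 := by
    rw [sub_ne_zero]; exact_mod_cast Ne.symm h1
  -- Integrality of the Cartan integer of `γ - α'` and `γ` forces `1 - n` to be a unit.
  obtain ⟨m, hm, -⟩ := hR.reflect_real (γ - α') hmem (hnorm ▸ mul_ne_zero h1' hγγ) γ hγ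
  rw [hnorm] at hm
  simp only [map_sub, LinearMap.sub_apply, hB α' γ] at hm
  have hz : ((1 - n : K)) * (m - 1) = 1 := by
    apply mul_right_cancel₀ hγγ
    linear_combination -hm - hn
  have hz' : (1 - n) * (m - 1) = 1 := by exact_mod_cast hz
  have hn2 : n = 2 := by
    rcases Int.eq_one_or_neg_one_of_mul_eq_one hz' with h | h
    · exfalso
      have : n = 0 := by omega
      rw [this] at hn
      simp at hn
      exact h' hn
    · omega
  right
  refine ⟨?_, hmem⟩
  rw [hn2] at hn
  push_cast at hn
  exact mul_left_cancel₀ two_ne_zero hn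

/-! ### Irreducibility -/

/-- In an irreducible GRRS any two roots have a common non-orthogonal root: the set of roots at
distance at most two from `α` in the non-orthogonality graph is orthogonal to its complement. -/
lemma exists_common_neighbour (hB : ∀ x y : V, B x y = B y x) (hR : IsGRRS B R)
    (hirr : GRRSIrreducible B R) {α β : V} (hα : α ∈ R) (hβ : β ∈ R) :
    ∃ γ ∈ R, B γ α ≠ 0 ∧ B γ β ≠ 0 := by
  by_contra hcon
  refine hirr ⟨{x ∈ R | ∃ γ ∈ R, B γ α ≠ 0 ∧ B γ x ≠ 0},
    {x ∈ R | ¬ ∃ γ ∈ R, B γ α ≠ 0 ∧ B γ x ≠ 0}, ?_, ⟨β, hβ, hcon⟩, ?_, ?_, ?_⟩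
  · refine ⟨α, hα, ?_⟩
    by_contra h
    push Not at h
    refine hR.form_ne α hα (LinearMap.ext_on hR.spans fun x hx => ?_)
    rw [hB, LinearMap.zero_apply]
    by_contra h'
    exact h' (h x hx h')
  · ext x
    simp only [Set.mem_union, Set.mem_ofPred_eq]
    rw [← and_or_left, and_iff_left (em _)]
  · rw [Set.disjoint_left]
    exact fun x h1 h2 => h2.2 h1.2
  · rintro x ⟨hx, γ, hγ, hγα, hγx⟩ y ⟨hy, hno⟩
    by_contra hxy
    push Not at hno
    have hγy := hno γ hγ hγα
    have hxα : B x α = 0 := by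
      by_contra h
      exact hxy (hno x hx h)
    -- Moving `x` along `γ` yields a root that is non-orthogonal to both `α` and `y`.
    obtain ⟨t, ht, hmem⟩ : ∃ t : K, t ≠ 0 ∧ x + t • γ ∈ R := by
      by_cases hγγ : B γ γ = 0
      · rcases add_or_sub_mem_s6 hR hγ hγγ hx hγx with h | h
        · exact ⟨1, one_ne_zero, by simpa using h⟩
        · exact ⟨-1, by simp, by simpa [sub_eq_add_neg] using h⟩
      · refine ⟨-(2 * B γ x / B γ γ), ?_, ?_⟩
        · simp [hγx, hγγ]
        · rw [neg_smul, ← sub_eq_add_neg]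
          exact reflect_mem hR hγ hγγ hx
    refine hxy ?_
    have := hno _ hmem (by simp [hxα, ht, hγα])
    simpa [hγy] using this

/-- The common non-orthogonal root of `exists_common_neighbour` can be taken real if `α` is
isotropic and orthogonal to `β`. -/
lemma exists_real_common_neighbour (hB : ∀ x y : V, B x y = B y x) (hR : IsGRRS B R)
    (hirr : GRRSIrreducible B R) {α β : V} (hα : α ∈ R) (hβ : β ∈ R) (hαα : B α α = 0)
    (hαβ : B α β = 0) : ∃ γ ∈ R, B γ γ ≠ 0 ∧ B γ α ≠ 0 ∧ B γ β ≠ 0 := by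
  obtain ⟨γ, hγ, h1, h2⟩ := exists_common_neighbour hB hR hirr hα hβ
  by_cases hγγ : B γ γ = 0
  · rcases add_or_sub_mem_s6 hR hα hαα hγ (by rwa [hB]) with h | h
    · refine ⟨_, h, ?_, ?_, ?_⟩ <;> simp [hγγ, hαα, hαβ, hB α γ, h1, h2, ← two_mul]
    · refine ⟨_, h, ?_, ?_, ?_⟩ <;> simp [hγγ, hαα, hαβ, hB α γ, h1, h2]
      rw [← neg_add', ← two_mul]
      simp [h1]
  · exact ⟨γ, hγ, hγγ, h1, h2⟩

/-! ### Fixed roots -/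

/-- If `u` is fixed by the automorphism `θ`, `(u, γ) = (γ, γ)`, and `u - γ` is a real root
whose square is a negative fraction of that of `γ`, then `γ` is fixed. Indeed `θγ ⊥ u - γ`, so
`(γ, θγ) = (γ, γ)`. -/
lemma fixed_of_complement [FiniteDimensional K V] (hB : ∀ x y : V, B x y = B y x)
    (hR : IsGRRS B R) (θ : V ≃ₗ[K] V) (hθB : ∀ x y : V, B (θ x) (θ y) = B x y)
    (hθR : θ '' R = R) {γ u : V} (hγ : γ ∈ R) (hγγ : B γ γ ≠ 0) (hu : θ u = u)
    (huγ : B u γ = B γ γ) (hmem : u - γ ∈ R) {e : ℕ}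
    (he : (e : K) * (B u u - B γ γ) = -B γ γ) : θ γ = γ := by
  have hθγ : θ γ ∈ R := hθR ▸ Set.mem_image_of_mem θ hγ
  have hu' : B (θ γ) u = B γ γ := by
    conv_lhs => rw [← hu]
    rw [hθB, hB, huγ]
  have h0 : B (θ γ) (u - γ) = 0 := by
    refine orthogonal_of_neg (e := e) hB hR hθγ (by rwa [hθB]) hmem ?_
    rw [hθB, ← he]
    simp only [map_sub, LinearMap.sub_apply, huγ, hB γ u]
    ring
  rw [map_sub, hu', sub_eq_zero] at h0
  exact eq_of_form_eq hB hR hθγ hγ hγγ (hθB γ γ) rfl h0.symm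

/-- If `2β` is a root, then the Cartan integers of `β` and a non-orthogonal real root `γ` are,
up to sign, those of a short and a long root of `B₂`. The vector `α` witnesses that `γ` is not
proportional to `β`. -/
lemma cartan_doubled [FiniteDimensional K V] (hB : ∀ x y : V, B x y = B y x) (hR : IsGRRS B R)
    {α β γ : V} (hβ : β ∈ R) (hββ : B β β ≠ 0) (h2β : (2 : K) • β ∈ R) (hγ : γ ∈ R)
    (hγγ : B γ γ ≠ 0) (hαβ : B α β = 0) (hγα : B γ α ≠ 0) (hγβ : B γ β ≠ 0) :
    2 * B β β = B γ γ ∧ ∃ β', (β' = β ∨ β' = -β) ∧ 2 * B γ β' = B γ γ := by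
  -- `γ` is not a multiple of `β`, as only `β` is orthogonal to `α`.
  have hnp : ∀ t : K, t • β ≠ γ := by
    rintro t rfl
    apply hγα
    rw [map_smul, LinearMap.smul_apply, hB β α, hαβ, smul_zero]
  obtain ⟨n, hn, -⟩ := hR.reflect_real γ hγ hγγ β hβ
  obtain ⟨p, q, hp, hq, h0, h4⟩ := cartan_bounds hB hR hγ hγγ h2β (by simp [hββ])
  simp only [map_smul, LinearMap.smul_apply, smul_eq_mul] at hp hq
  have hpn : p = 2 * n := by
    have : (p : K) = 2 * n := by
      apply mul_right_cancel₀ hγγ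
      linear_combination -hp + 2 * hn
    exact_mod_cast this
  have hq' : B γ β = q * B β β := by
    apply mul_left_cancel₀ (show (4 : K) ≠ 0 by norm_num)
    linear_combination hq
  have hn0 : n ≠ 0 := by
    rintro rfl
    simp [hγβ] at hn
  have hq0 : q ≠ 0 := by
    rintro rfl
    simp [hγβ] at hq'
  subst hpn
  have hpos : 0 < n * q := lt_of_le_of_ne (by nlinarith) (mul_ne_zero hn0 hq0).symm
  have hle : n * q ≤ 2 := by nlinarith
  have hn2 : n ∣ n * q := dvd_mul_right _ _
  have hcases : (n = 1 ∧ q = 1) ∨ (n = -1 ∧ q = -1) ∨ (n = 1 ∧ q = 2) ∨ (n = -1 ∧ q = -2) ∨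
      (n = 2 ∧ q = 1) ∨ (n = -2 ∧ q = -1) := by
    have hb1 : n ≤ 2 := le_trans (Int.le_of_dvd hpos hn2) hle
    have hb2 : -n ≤ 2 := le_trans (Int.le_of_dvd hpos ((neg_dvd).mpr hn2)) hle
    have hb3 : -2 ≤ n := by omega
    interval_cases n <;> omega
  rcases hcases with ⟨rfl, rfl⟩ | ⟨rfl, rfl⟩ | ⟨rfl, rfl⟩ | ⟨rfl, rfl⟩ | ⟨rfl, rfl⟩ | ⟨rfl, rfl⟩ <;>
    push_cast at hn hq'
  · exact ⟨by linear_combination hn - 2 * hq', β, Or.inl rfl, by linear_combination hn⟩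
  · refine ⟨by linear_combination -hn + 2 * hq', -β, Or.inr rfl, ?_⟩
    rw [map_neg]
    linear_combination -hn
  · refine absurd (eq_of_form_eq hB hR h2β hγ hγγ ?_ rfl ?_) (hnp 2) <;>
      simp only [map_smul, LinearMap.smul_apply, smul_eq_mul, hB β γ]
    · linear_combination hn - 2 * hq'
    · linear_combination hn
  · refine absurd (eq_of_form_eq hB hR (hR.neg_mem _ h2β) hγ hγγ ?_ rfl ?_)
      (by rw [← neg_smul]; exact hnp (-2)) <;>
      simp only [map_neg, LinearMap.neg_apply, map_smul, LinearMap.smul_apply, smul_eq_mul, hB β γ]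
    · linear_combination -hn + 2 * hq'
    · linear_combination -hn
  · refine absurd (eq_of_form_eq hB hR hβ hγ hγγ ?_ rfl ?_) (by simpa using hnp 1)
    · linear_combination (1 / 2 : K) * hn - hq'
    · rw [hB]
      linear_combination (1 / 2 : K) * hn
  · refine absurd (eq_of_form_eq hB hR (hR.neg_mem _ hβ) hγ hγγ ?_ rfl ?_)
      (by simpa using hnp (-1)) <;>
      simp only [map_neg, LinearMap.neg_apply, hB β γ]
    · linear_combination (-1 / 2 : K) * hn + hq'
    · linear_combination (-1 / 2 : K) * hn

/-- An isotropic fixed root is not orthogonal to all fixed roots, as soon as there is a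
second fixed odd root. -/
lemma exists_fixed_nonorthogonal [FiniteDimensional K V] (hB : ∀ x y : V, B x y = B y x)
    (hR : IsGRRS B R) (hirr : GRRSIrreducible B R) (θ : V ≃ₗ[K] V)
    (hθB : ∀ x y : V, B (θ x) (θ y) = B x y) (hθR : θ '' R = R) {α β : V} (hα : α ∈ R)
    (hβ : β ∈ R) (hθα : θ α = α) (hθβ : θ β = β) (hαα : B α α = 0) (hodd : IsOddRoot B R β)
    (hne : β ≠ α) (hne' : β ≠ -α) : ∃ γ ∈ R, θ γ = γ ∧ B α γ ≠ 0 := by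
  by_cases hαβ : B α β = 0
  swap
  · exact ⟨β, hβ, hθβ, hαβ⟩
  obtain ⟨γ, hγ, hγγ, hγα, hγβ⟩ := exists_real_common_neighbour hB hR hirr hα hβ hαα hαβ
  refine ⟨γ, hγ, ?_, by rwa [hB]⟩
  obtain ⟨α', hα', hα2⟩ := cartan_isotropic hB hR hγ hγγ hα hαα hγα
  have hα'R : α' ∈ R := by rcases hα' with rfl | rfl; exacts [hα, hR.neg_mem _ hα]
  have hθα' : θ α' = α' := by rcases hα' with rfl | rfl <;> simp [hθα]
  have hα'α' : B α' α' = 0 := by rcases hα' with rfl | rfl <;> simp [hαα]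
  have hα'β : B α' β = 0 := by rcases hα' with rfl | rfl <;> simp [hαβ]
  rcases hα2 with hα2 | ⟨hα2, hmem⟩
  swap
  · refine fixed_of_complement (e := 1) hB hR θ hθB hθR hγ hγγ hθα' (by rw [hB, hα2]) ?_ ?_
    · simpa using hR.neg_mem _ hmem
    · simp [hα'α']
  have hδ : α' - γ ∈ R := by
    have := reflect_mem hR hγ hγγ hα'R
    rwa [hα2, div_self hγγ, one_smul] at this
  by_cases hββ : B β β = 0
  · obtain ⟨β', hβ', hβ2⟩ := cartan_isotropic hB hR hγ hγγ hβ hββ hγβ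
    have hβ'R : β' ∈ R := by rcases hβ' with rfl | rfl; exacts [hβ, hR.neg_mem _ hβ]
    have hθβ' : θ β' = β' := by rcases hβ' with rfl | rfl <;> simp [hθβ]
    have hβ'β' : B β' β' = 0 := by rcases hβ' with rfl | rfl <;> simp [hββ]
    have hα'β' : B α' β' = 0 := by rcases hβ' with rfl | rfl <;> simp [hα'β]
    rcases hβ2 with hβ2 | ⟨hβ2, hmem⟩
    swap
    · refine fixed_of_complement (e := 1) hB hR θ hθB hθR hγ hγγ hθβ' (by rw [hB, hβ2]) ?_ ?_
      · simpa using hR.neg_mem _ hmem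
      · simp [hβ'β']
    have hγβ' : B γ β' ≠ 0 := by
      intro h
      rw [h, mul_zero] at hβ2
      exact hγγ hβ2.symm
    -- If `α' - γ - β'` is a root, then `γ` and `γ + β' - α'` have the Cartan integers of equal
    -- roots, so `α' = β'`, which is excluded.
    rcases add_or_sub_mem_s6 hR hβ'R hβ'β' hδ
      (by simpa [hB β' α', hα'β', hB β' γ] using hγβ') with h | h
    · refine fixed_of_complement (e := 1) (u := α' + β') hB hR θ hθB hθR hγ hγγ ?_ ?_ ?_ ?_
      · simp [hθα', hθβ']
      · simp only [map_add, LinearMap.add_apply, hB α' γ, hB β' γ]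
        linear_combination (1 / 2 : K) * hα2 + (1 / 2 : K) * hβ2
      · rwa [add_sub_right_comm]
      · simp [hα'α', hβ'β', hα'β', hB β' α']
    · have h3 : -(α' - γ - β') = γ := by
        refine eq_of_form_eq hB hR (hR.neg_mem _ h) hγ hγγ ?_ rfl ?_ <;>
          simp only [map_neg, map_sub, LinearMap.neg_apply, LinearMap.sub_apply, hα'α', hβ'β',
            hα'β', hB β' α', hB α' γ, hB β' γ]
        · linear_combination -hα2 + hβ2
        · linear_combination (-1 / 2 : K) * hα2 + (1 / 2 : K) * hβ2
      have h4 : β' = α' := by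
        have h5 : γ + β' = γ + α' := by
          rw [← sub_eq_iff_eq_add]
          refine Eq.trans ?_ h3
          abel
        exact add_left_cancel h5
      exfalso
      rcases hα' with rfl | rfl <;> rcases hβ' with rfl | rfl
      · exact hne h4
      · exact hne' (neg_eq_iff_eq_neg.mp h4)
      · exact hne' h4
      · exact hne (neg_injective h4)
  · obtain ⟨hc, β', hβ', hβ2⟩ :=
      cartan_doubled hB hR hβ hββ (hodd.resolve_left hββ) hγ hγγ hαβ hγα hγβ
    have hβ'R : β' ∈ R := by rcases hβ' with rfl | rfl; exacts [hβ, hR.neg_mem _ hβ]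
    have hθβ' : θ β' = β' := by rcases hβ' with rfl | rfl <;> simp [hθβ]
    have hβ'β' : B β' β' = B β β := by rcases hβ' with rfl | rfl <;> simp
    have hα'β' : B α' β' = 0 := by rcases hβ' with rfl | rfl <;> simp [hα'β]
    have hδδ : B (α' - γ) (α' - γ) = 0 := by
      simp only [map_sub, LinearMap.sub_apply, hα'α', hB α' γ]
      linear_combination -hα2
    have hβδ : B β' (α' - γ) = -B β β := by
      simp only [map_sub, hB β' α', hα'β', hB β' γ]
      linear_combination (-1 / 2 : K) * hβ2 + (1 / 2 : K) * hc
    -- The Cartan integer of `β'` and `α' - γ` is `-2`, so `β' + α' - γ` is a root.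
    have hmem : α' + β' - γ ∈ R := by
      obtain ⟨δ, hδ', h⟩ := cartan_isotropic hB hR hβ'R (hβ'β' ▸ hββ) hδ hδδ
        (by rw [hβδ]; simpa using hββ)
      rcases hδ' with rfl | rfl
      · exfalso
        rw [hβδ, hβ'β'] at h
        rcases h with h | ⟨h, -⟩
        · exact hββ (by linear_combination (-1 / 3 : K) * h)
        · exact hββ (by linear_combination (-1 / 2 : K) * h)
      · rw [map_neg, hβδ, hβ'β'] at h
        rcases h with h | ⟨-, h⟩
        · exact absurd (by linear_combination h) hββ
        · convert h using 1
          abel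
    refine fixed_of_complement (e := 2) (u := α' + β') hB hR θ hθB hθR hγ hγγ ?_ ?_ hmem ?_
    · simp [hθα', hθβ']
    · simp only [map_add, LinearMap.add_apply, hB α' γ, hB β' γ]
      linear_combination (1 / 2 : K) * hα2 + (1 / 2 : K) * hβ2
    · simp only [map_add, LinearMap.add_apply, hα'α', hα'β', hB β' α', hβ'β']
      push_cast
      linear_combination hc

end Helpers

/-- if the set `S` of roots fixed by an automorphism `θ` of an irreducible
GRRS `R` is nonempty and either contains two linearly independent odd roots or no odd
roots at all, then `S` is a GRRS in `span(S)`. -/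
theorem fixed_roots_grrs {K V : Type*} [Field K] [CharZero K]
    [AddCommGroup V] [Module K V] [FiniteDimensional K V]
    (B : LinearMap.BilinForm K V) (hB : ∀ x y : V, B x y = B y x)
    (R : Set V) (hR : IsGRRS B R) (hirr : GRRSIrreducible B R)
    (θ : V ≃ₗ[K] V) (hθB : ∀ x y : V, B (θ x) (θ y) = B x y) (hθR : θ '' R = R)
    (S : Set V) (hS : S = {α ∈ R | θ α = α})
    (hne : S.Nonempty)
    (hodd : (∃ α ∈ S, ∃ β ∈ S, IsOddRoot B R α ∧ IsOddRoot B R β ∧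
        LinearIndependent K ![α, β]) ∨ (∀ α ∈ S, ¬ IsOddRoot B R α)) :
    IsGRRSIn B S := by
  subst hS
  have hfin : {α ∈ R | θ α = α}.Finite := hR.finite.subset fun _ h => h.1
  refine ⟨hfin, hne, fun h => hR.zero_not_mem h.1, ?_, ?_, ?_, ?_⟩
  · rintro α ⟨hα, hθα⟩
    by_cases hαα : B α α = 0
    swap
    · exact ⟨α, ⟨hα, hθα⟩, hαα⟩
    rcases hodd with ⟨β₁, ⟨h1, hθ1⟩, β₂, ⟨h2, hθ2⟩, ho1, ho2, hli⟩ | hno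
    swap
    · exact absurd (Or.inl hαα) (hno α ⟨hα, hθα⟩)
    obtain ⟨β, hβ, hθβ, ho, hn1, hn2⟩ :
        ∃ β ∈ R, θ β = β ∧ IsOddRoot B R β ∧ β ≠ α ∧ β ≠ -α := by
      by_contra hcon
      push Not at hcon
      have e1 := hcon β₁ h1 hθ1 ho1
      have e2 := hcon β₂ h2 hθ2 ho2
      rw [LinearIndependent.pair_iff] at hli
      by_cases c1 : β₁ = α <;> by_cases c2 : β₂ = α
      · simpa using (hli 1 (-1) (by simp [c1, c2])).1
      · simpa using (hli 1 1 (by simp [c1, e2 c2])).1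
      · simpa using (hli 1 1 (by simp [e1 c1, c2])).1
      · simpa using (hli 1 (-1) (by simp [e1 c1, e2 c2])).1
    obtain ⟨γ, hγ, hθγ, h⟩ :=
      exists_fixed_nonorthogonal hB hR hirr θ hθB hθR hα hβ hθα hθβ hαα ho hn1 hn2
    exact ⟨γ, ⟨hγ, hθγ⟩, h⟩
  · rintro α ⟨hα, hθα⟩ hαα β ⟨hβ, hθβ⟩
    obtain ⟨n, hn, hmem⟩ := hR.reflect_real α hα hαα β hβ
    exact ⟨n, hn, hmem, by rw [map_sub, map_smul, hθα, hθβ]⟩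
  · rintro α ⟨hα, hθα⟩ hαα
    obtain ⟨r, hr, hr1, hr2⟩ := hR.reflect_iso α hα hαα
    refine ⟨r, ?_, fun β hβ => hr1 β hβ.1, fun β hβ => hr2 β hβ.1⟩
    have hmaps : Set.MapsTo r {α ∈ R | θ α = α} {α ∈ R | θ α = α} := by
      rintro β ⟨hβ, hθβ⟩
      refine ⟨hr.mapsTo hβ, ?_⟩
      by_cases h : B α β = 0
      · rw [hr1 β hβ h, hθβ]
      · rcases hr2 β hβ h with h | h <;> rw [h] <;> simp [hθα, hθβ]
    have hinj : Set.InjOn r {α ∈ R | θ α = α} := hr.injOn.mono fun _ h => h.1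
    -- An injective self-map of a finite set is bijective.
    exact (hfin.injOn_iff_bijOn_of_mapsTo hmaps).mp hinj
  · rintro α ⟨hα, hθα⟩
    exact ⟨hR.neg_mem α hα, by rw [map_neg, hθα]⟩

end GRRS
end

section
/- Let R be an irreducible GRRS in V, θ an automorphism of R with fixed roots S, T ⊆ S as defined, and T' = S∖T. Then: every root in T' is even; T is orthogonal to T' (i.e., (α,β) = 0 for all α ∈ T, β ∈ T'); if T' is nonempty then T' is a reduced root system in span(T'), i.e., T' is a GRRS in span(T') all of whose roots are even, and 2α ∉ T' for every α ∈ T'; and moreover S ∩ span(T) = T and S ∩ span(T') = T'. -/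
/-!
By construction the odd roots of `S` lie in `T` and a root of `S` not orthogonal to a root of `T`
lies in `T`; so `T'` consists of even roots and is orthogonal to `T`.  An element of `T` lying in
`span T'`, or of `T'` lying in `span T`, is therefore isotropic.  As `T'` has no isotropic element,
this gives `S ∩ span T = T`.  If `α, β ∈ T'`, the reflected root `r_α(β)` lies in `S`; were it in
`T`, it would be orthogonal to `α`, so `(α, β) = 0` and `r_α(β) = β ∈ T'`, a contradiction.  Hence
`T'` is stable under its own reflections.

For `S ∩ span T' = T'` one needs that the form is nondegenerate on `span T'`
(`eq_zero_of_mem_span_of_orthogonal`).  If `x ∈ span T'` is orthogonal to `T'`, every reflection in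
a root of `T'` fixes `x`.  Averaging over the finite group of permutations of `T'` induced by
linear maps fixing `x` preserves `x`, but kills every root `α` of `T'`, since the reflection in
`α` belongs to that group and negates `α`.  Hence `x = 0`.
-/

namespace GRRS

open Submodule

variable {K V : Type*} [Field K] [CharZero K] [AddCommGroup V] [Module K V]

/-- The form is nondegenerate on the span of a finite set of non-isotropic vectors that is stable
under its own reflections: a vector of the span orthogonal to the whole set vanishes. -/
theorem eq_zero_of_mem_span_of_orthogonal {K V : Type*} [Field K] [CharZero K]
    [AddCommGroup V] [Module K V] (B : LinearMap.BilinForm K V) (P : Set V) (hfin : P.Finite)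
    (hre : ∀ α ∈ P, B α α ≠ 0) (hrefl : ∀ α ∈ P, ∀ β ∈ P, reflectionOf B α β ∈ P)
    (x : V) (hx : x ∈ span K P) (horth : ∀ α ∈ P, B α x = 0) : x = 0 := by
  classical
  have : Fintype P := hfin.fintype
  -- The permutations of `P` induced by a linear map fixing `x`.
  let F : Finset (Equiv.Perm P) := Finset.univ.filter
    fun σ => ∃ f : V →ₗ[K] V, (∀ a : P, f a = σ a) ∧ f x = x
  have hF : ∀ σ : F, ∃ f : V →ₗ[K] V, (∀ a : P, f a = σ.1 a) ∧ f x = x :=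
    fun σ => (Finset.mem_filter.1 σ.2).2
  choose f hfP hfx using hF
  let E : V →ₗ[K] V := ∑ σ : F, f σ
  have hEx : E x = (F.card : K) • x := by
    simp [E, LinearMap.sum_apply, hfx, Nat.cast_smul_eq_nsmul]
  have hcard : (F.card : K) ≠ 0 := by
    have h1 : (1 : Equiv.Perm P) ∈ F :=
      Finset.mem_filter.2 ⟨Finset.mem_univ _, LinearMap.id, by simp, rfl⟩
    exact_mod_cast (Finset.card_pos.2 ⟨_, h1⟩).ne'
  have hEP : ∀ α ∈ P, E α = 0 := by
    intro α hα
    have hαα := hre α hα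
    let s : V →ₗ[K] V := Module.preReflection α ((2 / B α α) • B α)
    have hs : ∀ v, s v = reflectionOf B α v := by
      intro v
      simp only [s, Module.preReflection_apply, reflectionOf, LinearMap.smul_apply, smul_eq_mul]
      congr 2
      ring
    have hsα : s α = -α := Module.preReflection_apply_self (by simp [hαα])
    have hinv : ∀ v, s (s v) = v := Module.involutive_preReflection (by simp [hαα])
    let g : P → P := fun β => ⟨s β, by rw [hs]; exact hrefl α hα β β.2⟩
    have hg : Function.Involutive g := fun β => Subtype.ext (hinv β)
    let τ : Equiv.Perm P := hg.toPerm
    have hτ : ∀ β : P, ((τ β : P) : V) = s β := fun β => rfl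
    have hττ : τ * τ = 1 := Equiv.ext fun β => hg β
    have hsx : s x = x := by simp [s, Module.preReflection_apply, horth α hα]
    have hmul : ∀ σ ∈ F, σ * τ ∈ F := by
      intro σ hσ
      refine Finset.mem_filter.2 ⟨Finset.mem_univ _, f ⟨σ, hσ⟩ ∘ₗ s, fun a => ?_, ?_⟩
      · rw [LinearMap.comp_apply, ← hτ, hfP]
        rfl
      · rw [LinearMap.comp_apply, hsx, hfx]
    have hE : E α = ∑ σ ∈ F, ((σ ⟨α, hα⟩ : P) : V) := by
      rw [← Finset.sum_coe_sort F]
      simp only [E, LinearMap.sum_apply]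
      exact Finset.sum_congr rfl fun σ _ => hfP σ ⟨α, hα⟩
    -- Reindexing the sum by `σ ↦ σ * τ` changes its sign, as `τ` negates `α`.
    have hneg : ∑ σ ∈ F, ((σ ⟨α, hα⟩ : P) : V) = ∑ σ ∈ F, -((σ ⟨α, hα⟩ : P) : V) := by
      refine Finset.sum_bij' (fun σ _ => σ * τ) (fun σ _ => σ * τ) hmul hmul
        (fun σ _ => by rw [mul_assoc, hττ, mul_one])
        (fun σ _ => by rw [mul_assoc, hττ, mul_one]) fun σ hσ => ?_
      have h1 := hfP ⟨σ, hσ⟩ (τ ⟨α, hα⟩)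
      have h2 := hfP ⟨σ, hσ⟩ ⟨α, hα⟩
      rw [hτ] at h1
      simp only [hsα, map_neg] at h1 h2
      rw [Equiv.Perm.mul_apply, ← h1, h2, neg_neg]
    rw [Finset.sum_neg_distrib, ← hE] at hneg
    have h2 : (2 : K) • E α = 0 := by rw [two_smul]; exact add_eq_zero_iff_eq_neg.2 hneg
    exact (smul_eq_zero.1 h2).resolve_left two_ne_zero
  have hE0 : E x = 0 := (span_le (p := LinearMap.ker E)).2 (fun α hα => hEP α hα) hx
  rw [hEx] at hE0
  exact (smul_eq_zero.1 hE0).resolve_left hcard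

/-- with `T ⊆ S` as in Statement 7 and `T' = S \ T`: every root of `T'` is
even, `T ⊥ T'`, if `T'` is nonempty it is a reduced (even) root system in `span(T')`,
and `S ∩ span(T) = T`, `S ∩ span(T') = T'`. -/
theorem properties_of_T_complement {K V : Type*} [Field K] [CharZero K]
    [AddCommGroup V] [Module K V] [FiniteDimensional K V]
    (B : LinearMap.BilinForm K V) (hB : ∀ x y : V, B x y = B y x)
    (R : Set V) (hR : IsGRRS B R) (hirr : GRRSIrreducible B R)
    (θ : V ≃ₗ[K] V) (hθB : ∀ x y : V, B (θ x) (θ y) = B x y) (hθR : θ '' R = R)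
    (S : Set V) (hS : S = {α ∈ R | θ α = α})
    (T : Set V) (hTS : T ⊆ S)
    (hTodd : ∀ α ∈ S, IsOddRoot B R α → α ∈ T)
    (hTclosed : ∀ α ∈ T, ∀ β ∈ S, B α β ≠ 0 → β ∈ T)
    (hTmin : ∀ T₂ : Set V, T₂ ⊆ S → (∀ α ∈ S, IsOddRoot B R α → α ∈ T₂) →
      (∀ α ∈ T₂, ∀ β ∈ S, B α β ≠ 0 → β ∈ T₂) → T ⊆ T₂)
    (T' : Set V) (hT' : T' = S \ T) :
    (∀ β ∈ T', ¬ IsOddRoot B R β) ∧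
    (∀ α ∈ T, ∀ β ∈ T', B α β = 0) ∧
    (T'.Nonempty →
      IsGRRSIn B T' ∧ (∀ β ∈ T', ¬ IsOddRoot B T' β) ∧
      (∀ β ∈ T', (2 : K) • β ∉ T')) ∧
    S ∩ ↑(span K T) = T ∧ S ∩ ↑(span K T') = T' := by
  have heven : ∀ β ∈ T', ¬ IsOddRoot B R β := by
    intro β hβ ho
    rw [hT'] at hβ
    exact hβ.2 (hTodd β hβ.1 ho)
  have horth : ∀ α ∈ T, ∀ β ∈ T', B α β = 0 := by
    intro α hα β hβ
    rw [hT'] at hβ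
    by_contra h
    exact hβ.2 (hTclosed α hα β hβ.1 h)
  have hreal : ∀ β ∈ T', B β β ≠ 0 := fun β hβ h => heven β hβ (Or.inl h)
  have hTS' : T' ⊆ S := hT' ▸ Set.sdiff_subset
  have hSR : S ⊆ R := hS ▸ Set.sep_subset _ _
  have hTR : T' ⊆ R := hTS'.trans hSR
  have hθ : ∀ β ∈ S, θ β = β := fun β hβ => by rw [hS] at hβ; exact hβ.2
  have hmemS : ∀ β ∈ R, θ β = β → β ∈ S := fun β h1 h2 => by rw [hS]; exact ⟨h1, h2⟩
  have hmem : ∀ β ∈ S, β ∉ T → β ∈ T' := fun β h1 h2 => by rw [hT']; exact ⟨h1, h2⟩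
  have hnot : ∀ β ∈ T', β ∉ T := fun β h1 => by rw [hT'] at h1; exact h1.2
  have hrefl : ∀ α ∈ T', ∀ β ∈ T',
      ∃ n : ℤ, 2 * B α β = (n : K) * B α α ∧ β - (n : K) • α ∈ T' := by
    intro α hα β hβ
    obtain ⟨n, hn, hnR⟩ := hR.reflect_real α (hTR hα) (hreal α hα) β (hTR hβ)
    refine ⟨n, hn, hmem _ (hmemS _ hnR ?_) fun hT => ?_⟩
    · rw [map_sub, map_smul, hθ α (hTS' hα), hθ β (hTS' hβ)]
    · -- `β - n α` is orthogonal to `α` if it lies in `T`, which forces `n = 0`.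
      have h1 := horth _ hT α hα
      rw [map_sub, map_smul, LinearMap.sub_apply, LinearMap.smul_apply, smul_eq_mul, ← hn,
        hB β α] at h1
      have h2 : B α β = 0 := by linear_combination -h1
      have h3 : (n : K) = 0 := by
        rw [h2, mul_zero] at hn
        exact (mul_eq_zero.1 hn.symm).resolve_right (hreal α hα)
      rw [h3, zero_smul, sub_zero] at hT
      exact hnot β hβ hT
  have hnd : ∀ x ∈ span K T', (∀ α ∈ T', B α x = 0) → x = 0 := by
    refine eq_zero_of_mem_span_of_orthogonal B T' (hR.finite.subset hTR) hreal ?_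
    intro α hα β hβ
    obtain ⟨n, hn, hm⟩ := hrefl α hα β hβ
    rwa [reflectionOf, hn, mul_div_cancel_right₀ _ (hreal α hα)]
  refine ⟨heven, horth, fun hne => ⟨⟨hR.finite.subset hTR, hne, fun h => hR.zero_not_mem (hTR h),
    fun α hα => ⟨α, hα, hreal α hα⟩, fun α hα _ β hβ => hrefl α hα β hβ,
    fun α hα h => absurd h (hreal α hα), fun α hα => ?_⟩, fun β hβ ho => ?_,
    fun β hβ h => heven β hβ (Or.inr (hTR h))⟩, ?_, ?_⟩
  · refine hmem _ (hmemS _ (hR.neg_mem α (hTR hα)) (by rw [map_neg, hθ α (hTS' hα)])) fun h => ?_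
    have h1 := horth _ h α hα
    rw [map_neg, LinearMap.neg_apply, neg_eq_zero] at h1
    exact hreal α hα h1
  · exact heven β hβ (ho.imp_right fun h => hTR h)
  · refine Set.Subset.antisymm (fun x hx => ?_) fun x hx => ⟨hTS hx, subset_span hx⟩
    by_contra hxT
    have hx' := hmem x hx.1 hxT
    refine hreal x hx' ?_
    exact (span_le (p := LinearMap.ker (B x))).2
      (fun α hα => by simpa [hB x α] using horth α hα x hx') hx.2
  · refine Set.Subset.antisymm (fun x hx => hmem x hx.1 fun hxT => ?_)
      fun x hx => ⟨hTS' hx, subset_span hx⟩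
    have h0 := hnd x hx.2 fun α hα => by rw [hB]; exact horth x hxT α hα
    exact hR.zero_not_mem (h0 ▸ hSR hx.1)

end GRRS
end
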